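/- arXiv:2001.06085 — 2 statements merged into one kernel-verified Lean document; each statement's English description precedes it below -/
import Mathlib

section
/- For any integers n ≥ 1, k ≥ 0 and any real c > 0, letting F_{n,k} be the set of all n-concave probability densities f on ℝ^k with sup_{x∈ℝ^k} f(x) = 1, the following identity holds: P(Binomial(n, 1 − e^{−c/n}) ≤ k) = sup_{f ∈ F_{n,k}} ∫_{ℝ^k} min{f(x), e^{−c}} dx. -/
/-!
Write `f = g ^ (-n)` and let `V t` be the volume of `{f > t} = {g < t ^ (-1/n)}`. The layer-cake
formula gives `∫ min f τ = ∫₀^τ V`, so everything is a statement about `V` on `(0, 1)`, to be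
compared with the profile `V₀ t = (t ^ (-1/n) - 1) ^ k` (`levelProfile`) of `(1 + ‖x‖) ^ (-n)`.

*Upper bound.* Contracting `{g < s'}` towards a near-minimiser of `g` (where `g ≈ 1`) by the factor
`(s - 1) / (s' - 1)` lands in `{g < s}`, by convexity. Hence `V / V₀` is nondecreasing
(`levelProfile_mul_le`), and so `∫₀^τ V / ∫₀^1 V ≤ ∫₀^τ V₀ / ∫₀^1 V₀` whenever `k < n`. The right
side is the binomial CDF at `q = τ ^ (1/n)`: the derivative in `q` of the binomial sum telescopes to
`(n - k) C(n, k) (1 - q) ^ k q ^ (n - k - 1)` (`hasDerivAt_binomSum`), which after the substitution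
`t = q ^ n` is a multiple of `V₀` (`integral_levelProfile`). If `k ≥ n` the CDF equals `1` and the
bound is trivial.

*Sharpness.* Any `h` satisfying all constraints but the normalisation can be dilated to total mass
`1`, with value `∫ min h τ / ∫ h` (`exists_normalized`). If `k < n`, the function
`h = (1 + ‖x‖) ^ (-n)` attains the bound. If `k ≥ n`, this `h` is not integrable, so its truncations
to large balls have arbitrarily large mass, while the mass of `h - min h τ` stays bounded; the
ratios therefore tend to `1`.
-/

open MeasureTheory

/-- A function `f` on `ℝ^k` is β-concave (β > 0) if `f(x) = g(x)^{-β}` for some convex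
function `g : ℝ^k → (0, ∞]`; the effective domain of `g` is encoded as a convex set `s` on
which a positive real-valued convex function `g` is given, with `f = 0` outside `s`. -/
def IsBetaConcave (k : ℕ) (β : ℝ) (f : (Fin k → ℝ) → ℝ) : Prop :=
  ∃ (s : Set (Fin k → ℝ)) (g : (Fin k → ℝ) → ℝ),
    ConvexOn ℝ s g ∧ (∀ x ∈ s, 0 < g x ∧ f x = g x ^ (-β)) ∧ ∀ x ∉ s, f x = 0

open Set Filter Topology

/-- The CDF at `k` of the binomial distribution with `n` trials and failure probability `q`. -/
noncomputable def binomSum (n k : ℕ) (q : ℝ) : ℝ :=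
  ∑ j ∈ Finset.range (k + 1), (n.choose j : ℝ) * (1 - q) ^ j * q ^ (n - j)

/-- The profile `t ↦ (t ^ (-1/n) - 1) ^ k`: up to the factor `2 ^ k`, the volume of the superlevel
set at height `t ∈ (0, 1)` of `(1 + ‖x‖) ^ (-n)` on `ℝ^k` with the sup norm. -/
noncomputable def levelProfile (n k : ℕ) (t : ℝ) : ℝ :=
  (t ^ (-(n : ℝ))⁻¹ - 1) ^ k

/-! ### The binomial sum as an integral -/

lemma hasDerivAt_binomSum (n k : ℕ) (hk : k < n) (q : ℝ) :
    HasDerivAt (binomSum n k)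
      (((n : ℝ) - k) * n.choose k * (1 - q) ^ k * q ^ (n - k - 1)) q := by
  induction k with
  | zero =>
    have : binomSum n 0 = fun q => q ^ n := by
      funext q; simp [binomSum]
    rw [this]
    simpa using hasDerivAt_pow n q
  | succ k ih =>
    have e : binomSum n (k + 1) = fun q => binomSum n k q +
        (n.choose (k + 1) : ℝ) * (1 - q) ^ (k + 1) * q ^ (n - (k + 1)) := by
      funext q; simp [binomSum, Finset.sum_range_succ _ (k + 1)]
    rw [e]
    have h1 : HasDerivAt (fun q : ℝ => 1 - q) (-1) q := by
      simpa using (hasDerivAt_id q).const_sub 1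
    have h2 := (((h1.pow (k + 1)).const_mul (n.choose (k + 1) : ℝ)).mul
      (hasDerivAt_pow (n - (k + 1)) q))
    refine ((ih (by omega)).add h2).congr_deriv ?_
    obtain ⟨m, rfl⟩ : ∃ m, n = k + 1 + 1 + m := ⟨n - (k + 2), by omega⟩
    have hch : ((k + 1 + 1 + m).choose (k + 1) : ℝ) * (k + 1)
        = (k + 1 + 1 + m).choose k * (m + 2) := by
      have := Nat.choose_succ_right_eq (k + 1 + 1 + m) k
      rw [show k + 1 + 1 + m - k = m + 2 by omega] at this
      exact_mod_cast this
    rw [show k + 1 + 1 + m - k - 1 = m + 1 by omega,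
      show k + 1 + 1 + m - (k + 1) = m + 1 by omega]
    simp only [Nat.add_sub_cancel, Pi.pow_apply]
    push_cast
    linear_combination (-(1 - q) ^ k * q ^ (m + 1)) * hch

/-- For `k ≥ n` the sum is the full binomial expansion of `((1 - q) + q) ^ n`. -/
lemma binomSum_of_le {n k : ℕ} (h : n ≤ k) (q : ℝ) : binomSum n k q = 1 := by
  have h1 : binomSum n k q = ∑ j ∈ Finset.range (n + 1),
      (n.choose j : ℝ) * (1 - q) ^ j * q ^ (n - j) := by
    symm
    apply Finset.sum_subset
    · intro j; simp only [Finset.mem_range]; omega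
    · intro j _ hj
      simp only [Finset.mem_range] at hj
      rw [Nat.choose_eq_zero_of_lt (by omega)]; simp
  rw [h1]
  have := add_pow (1 - q) q n
  simp only [sub_add_cancel, one_pow] at this
  refine Eq.trans (Finset.sum_congr rfl fun j _ => ?_) this.symm
  ring

lemma binomSum_zero {n k : ℕ} (h : k < n) : binomSum n k 0 = 0 := by
  apply Finset.sum_eq_zero
  intro j hj
  simp only [Finset.mem_range] at hj
  rw [zero_pow (by omega)]; simp

lemma binomSum_one (n k : ℕ) : binomSum n k 1 = 1 := by
  simp [binomSum, Finset.sum_range_succ']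

lemma one_lt_rpow_of_lt_one {n : ℕ} (hn : 1 ≤ n) {t : ℝ} (h0 : 0 < t) (h1 : t < 1) :
    1 < t ^ (-(n : ℝ))⁻¹ := by
  have : (0 : ℝ) < n := by exact_mod_cast hn
  apply Real.one_lt_rpow_of_pos_of_lt_one_of_neg h0 h1
  rw [inv_neg]
  simpa using this

lemma levelProfile_pos {n : ℕ} (k : ℕ) (hn : 1 ≤ n) {t : ℝ} (h0 : 0 < t) (h1 : t < 1) :
    0 < levelProfile n k t :=
  pow_pos (sub_pos.2 (one_lt_rpow_of_lt_one hn h0 h1)) k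

/-- The binomial CDF is the normalised primitive of the level profile, in the variable
`t = q ^ n`. -/
lemma integral_levelProfile {n k : ℕ} (hk : k < n) :
    ∃ K : ℝ, 0 < K ∧ ∀ τ : ℝ, 0 < τ → τ ≤ 1 →
      IntervalIntegrable (levelProfile n k) volume 0 τ ∧
      K * ∫ t in (0)..τ, levelProfile n k t = binomSum n k (τ ^ (n : ℝ)⁻¹) := by
  have hn : (0 : ℝ) < n := by exact_mod_cast (by omega : 0 < n)
  have hkn : (k : ℝ) < n := by exact_mod_cast hk
  have hch : (0 : ℝ) < n.choose k := by exact_mod_cast Nat.choose_pos hk.le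
  set K : ℝ := ((n : ℝ) - k) * n.choose k / n with hK
  have hKpos : 0 < K := by have := sub_pos.2 hkn; positivity
  refine ⟨K, hKpos, fun τ h0 h1 => ?_⟩
  have hcont : ContinuousOn (fun t : ℝ => binomSum n k (t ^ (n : ℝ)⁻¹)) (Icc 0 τ) := by
    have : Continuous (binomSum n k) := by unfold binomSum; fun_prop
    exact (this.comp (Real.continuous_rpow_const (by positivity))).continuousOn
  have hder : ∀ t ∈ Ioo 0 τ, HasDerivAt (fun t : ℝ => binomSum n k (t ^ (n : ℝ)⁻¹))
      (K * levelProfile n k t) t := by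
    intro t ht
    have h := (hasDerivAt_binomSum n k hk (t ^ (n : ℝ)⁻¹)).comp t
      (Real.hasDerivAt_rpow_const (p := (n : ℝ)⁻¹) (Or.inl ht.1.ne'))
    refine h.congr_deriv ?_
    have hq : 0 < t ^ (n : ℝ)⁻¹ := Real.rpow_pos_of_pos ht.1 _
    have e1 : t ^ (-(n : ℝ))⁻¹ = (t ^ (n : ℝ)⁻¹)⁻¹ := by
      rw [inv_neg, Real.rpow_neg ht.1.le]
    have e2 : (t ^ (n : ℝ)⁻¹) ^ n = t := Real.rpow_inv_natCast_pow ht.1.le (by omega)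
    have e3 : t ^ ((n : ℝ)⁻¹ - 1) = t ^ (n : ℝ)⁻¹ / (t ^ (n : ℝ)⁻¹) ^ n := by
      rw [e2, Real.rpow_sub ht.1, Real.rpow_one]
    rw [levelProfile, e1, e3, hK]
    generalize t ^ (n : ℝ)⁻¹ = q at hq
    obtain ⟨m, hm⟩ : ∃ m, n = k + 1 + m := ⟨n - (k + 1), by omega⟩
    have e4 : q⁻¹ - 1 = (1 - q) / q := by field_simp
    have e5 : q ^ n = q ^ k * q ^ (n - k - 1) * q := by
      rw [← pow_add, ← pow_succ]; congr 1; omega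
    rw [e4, e5, div_pow]
    field_simp
  have hint : IntervalIntegrable (fun t => K * levelProfile n k t) volume 0 τ := by
    rw [intervalIntegrable_iff_integrableOn_Ioc_of_le h0.le]
    refine intervalIntegral.integrableOn_deriv_of_nonneg hcont hder fun t ht => ?_
    exact (mul_pos hKpos (levelProfile_pos k (by omega) ht.1 (ht.2.trans_le h1))).le
  refine ⟨?_, ?_⟩
  · have := hint.const_mul K⁻¹
    simpa [← mul_assoc, inv_mul_cancel₀ hKpos.ne'] using this
  · rw [← intervalIntegral.integral_const_mul,
      intervalIntegral.integral_eq_sub_of_hasDerivAt_of_le h0.le hcont hder hint]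
    rw [Real.zero_rpow (by positivity), binomSum_zero hk, sub_zero]

/-! ### Layer cake and monotonicity of the level-set ratio -/

lemma integrable_min_const {α : Type*} [MeasurableSpace α] {μ : Measure α} {f : α → ℝ}
    (hf : Integrable f μ) (h0 : ∀ x, 0 ≤ f x) {τ : ℝ} (hτ : 0 < τ) :
    Integrable (fun x => min (f x) τ) μ := by
  refine hf.mono (hf.aestronglyMeasurable.inf aestronglyMeasurable_const) ?_
  refine Eventually.of_forall fun x => ?_
  rw [Real.norm_of_nonneg (le_min (h0 x) hτ.le), Real.norm_of_nonneg (h0 x)]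
  exact min_le_left _ _

lemma integral_min_eq {α : Type*} [MeasurableSpace α] {μ : Measure α} {f : α → ℝ}
    (hf : Integrable f μ) (h0 : ∀ x, 0 ≤ f x) {τ : ℝ} (hτ : 0 < τ) :
    ∫ x, min (f x) τ ∂μ = ∫ t in (0)..τ, μ.real {x | t < f x} := by
  rw [(integrable_min_const hf h0 hτ).integral_eq_integral_meas_lt
    (Eventually.of_forall fun x => le_min (h0 x) hτ.le)]
  rw [intervalIntegral.integral_of_le hτ.le, integral_Ioc_eq_integral_Ioo]
  have : ∀ t : ℝ, μ.real {x | t < min (f x) τ}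
      = (Iio τ).indicator (fun t => μ.real {x | t < f x}) t := by
    intro t
    by_cases ht : t < τ <;> simp [ht]
  simp_rw [this]
  rw [setIntegral_indicator measurableSet_Iio, Ioi_inter_Iio]

/-- The ratio of `volume {f > t}` to `levelProfile n k t` is nondecreasing on `(0, 1)`. -/
lemma levelProfile_mul_le {n k : ℕ} (hn : 1 ≤ n) {f : (Fin k → ℝ) → ℝ} (hf : Integrable f)
    (hc : IsBetaConcave k n f) (hsup : IsLUB (range f) 1) {t' t : ℝ} (h0 : 0 < t')
    (htt : t' ≤ t) (h1 : t < 1) :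
    levelProfile n k t * volume.real {x | t' < f x}
      ≤ levelProfile n k t' * volume.real {x | t < f x} := by
  obtain ⟨D, g, hg, hgD, hD⟩ := hc
  have hn0 : (0 : ℝ) < n := by exact_mod_cast hn
  have ht : 0 < t := h0.trans_le htt
  have hlev : ∀ r : ℝ, 0 < r → ∀ x, r < f x ↔ x ∈ D ∧ g x < r ^ (-(n : ℝ))⁻¹ := by
    intro r hr x
    by_cases hx : x ∈ D
    · rw [(hgD x hx).2, Real.lt_rpow_inv_iff_of_neg (hgD x hx).1 hr (by linarith)]
      simp [hx]
    · simp [hx, hD x hx, hr.le]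
  set s := t ^ (-(n : ℝ))⁻¹ with hs
  set s' := t' ^ (-(n : ℝ))⁻¹ with hs'
  have hs1 : 1 < s := one_lt_rpow_of_lt_one hn ht h1
  have hss : s ≤ s' := by
    apply Real.rpow_le_rpow_of_nonpos h0 htt
    rw [inv_neg]; simp
  have key : ∀ u ∈ Ioo 1 s, (s - u) ^ k * volume.real {x | t' < f x}
      ≤ (s' - u) ^ k * volume.real {x | t < f x} := by
    intro u hu
    have hu0 : 0 < u := by linarith [hu.1]
    have hs'u : 0 < s' - u := by linarith [hu.2]
    -- `u > 1 = inf g`, so some point `x₀` has `g x₀ < u`.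
    have hu1 : u ^ (-(n : ℝ)) < 1 :=
      Real.rpow_lt_one_of_one_lt_of_neg hu.1 (by linarith)
    obtain ⟨_, ⟨x₀, rfl⟩, hx₀⟩ := (lt_isLUB_iff hsup).1 hu1
    obtain ⟨hx₀D, hx₀g⟩ := (hlev _ (Real.rpow_pos_of_pos hu0 _) x₀).1 hx₀
    rw [Real.rpow_rpow_inv hu0.le (by linarith)] at hx₀g
    set l := (s - u) / (s' - u) with hl
    have hl0 : 0 < l := div_pos (by linarith [hu.2]) hs'u
    have hl1 : l ≤ 1 := (div_le_one hs'u).2 (by linarith)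
    have hls : l * (s' - u) = s - u := by rw [hl]; field_simp
    have hsub : AffineMap.homothety x₀ l '' {x | t' < f x} ⊆ {x | t < f x} := by
      rintro _ ⟨x, hx, rfl⟩
      obtain ⟨hxD, hxg⟩ := (hlev t' h0 x).1 hx
      refine (hlev t ht _).2 ?_
      have e : AffineMap.homothety x₀ l x = (1 - l) • x₀ + l • x := by
        simp only [AffineMap.homothety_apply, vsub_eq_sub, vadd_eq_add, smul_sub, sub_smul,
          one_smul]
        abel
      rw [e]
      refine ⟨hg.1 hx₀D hxD (by linarith) hl0.le (by ring), ?_⟩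
      refine (hg.2 hx₀D hxD (by linarith) hl0.le (by ring)).trans_lt ?_
      simp only [smul_eq_mul]
      have a1 := mul_le_mul_of_nonneg_left hx₀g.le (by linarith : 0 ≤ 1 - l)
      have a2 := mul_lt_mul_of_pos_left hxg hl0
      rw [← hs'] at a2
      rw [← hs]
      linarith
    have hvol := measureReal_mono hsub (μ := volume) (hf.measure_gt_lt_top ht).ne
    rw [Measure.real, Measure.addHaar_image_homothety, ENNReal.toReal_mul,
      ENNReal.toReal_ofReal (abs_nonneg _), Module.finrank_fin_fun, abs_of_pos (by positivity)]
      at hvol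
    have := mul_le_mul_of_nonneg_left hvol (pow_nonneg hs'u.le k)
    rw [← mul_assoc, ← mul_pow, mul_comm (s' - u) l, hls] at this
    exact this
  have hlim : ∀ a b : ℝ, Tendsto (fun u : ℝ => (a - u) ^ k * b) (𝓝[>] 1) (𝓝 ((a - 1) ^ k * b)) := by
    intro a b
    have : Continuous fun u : ℝ => (a - u) ^ k * b := by fun_prop
    exact (this.tendsto 1).mono_left nhdsWithin_le_nhds
  exact le_of_tendsto_of_tendsto (hlim s _) (hlim s' _)
    (eventually_of_mem (Ioo_mem_nhdsGT hs1) key)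

/-! ### The upper bound -/

lemma integral_min_le_binomSum {n k : ℕ} (hn : 1 ≤ n) {f : (Fin k → ℝ) → ℝ}
    (h0 : ∀ x, 0 ≤ f x) (hint : ∫ x, f x = 1)
    (hc : IsBetaConcave k n f) (hsup : IsLUB (range f) 1) {τ : ℝ} (hτ0 : 0 < τ) (hτ1 : τ < 1) :
    ∫ x, min (f x) τ ≤ binomSum n k (τ ^ (n : ℝ)⁻¹) := by
  have hf : Integrable f := by
    by_contra h
    rw [integral_undef h] at hint
    exact zero_ne_one hint
  rcases le_or_gt n k with hk | hk
  · rw [binomSum_of_le hk, ← hint]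
    exact integral_mono (integrable_min_const hf h0 hτ0) hf fun x => min_le_left _ _
  obtain ⟨K, hK, hprof⟩ := integral_levelProfile hk
  obtain ⟨hi, hiS⟩ := hprof τ hτ0 hτ1.le
  obtain ⟨hi1, hiS1⟩ := hprof 1 one_pos le_rfl
  rw [Real.one_rpow, binomSum_one] at hiS1
  have hA := integral_min_eq hf h0 hτ0
  have hT := integral_min_eq hf h0 one_pos
  have hle : ∀ x, f x ≤ 1 := fun x => hsup.1 ⟨x, rfl⟩
  simp only [min_eq_left (hle _), hint] at hT
  set V : ℝ → ℝ := fun t => volume.real {x | t < f x} with hV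
  have hVi1 : IntervalIntegrable V volume 0 1 := by
    by_contra h
    rw [intervalIntegral.integral_undef h] at hT
    exact one_ne_zero hT
  have hsub1 : uIcc 0 τ ⊆ uIcc 0 1 := by
    rw [uIcc_of_le hτ0.le, uIcc_of_le zero_le_one]; exact Icc_subset_Icc le_rfl hτ1.le
  have hsub2 : uIcc τ 1 ⊆ uIcc 0 1 := by
    rw [uIcc_of_le hτ1.le, uIcc_of_le zero_le_one]; exact Icc_subset_Icc hτ0.le le_rfl
  have hVi := hVi1.mono_set hsub1
  have hVi' := hVi1.mono_set hsub2
  have hi' := hi1.mono_set hsub2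
  have m1 : ∫ t in (0)..τ, levelProfile n k τ * V t
      ≤ ∫ t in (0)..τ, levelProfile n k t * V τ :=
    intervalIntegral.integral_mono_on_of_le_Ioo hτ0.le (hVi.const_mul _) (hi.mul_const _)
      fun t ht => levelProfile_mul_le hn hf hc hsup ht.1 ht.2.le hτ1
  have m2 : ∫ t in τ..1, levelProfile n k t * V τ
      ≤ ∫ t in τ..1, levelProfile n k τ * V t :=
    intervalIntegral.integral_mono_on_of_le_Ioo hτ1.le (hi'.mul_const _) (hVi'.const_mul _)
      fun t ht => levelProfile_mul_le hn hf hc hsup hτ0 ht.1.le ht.2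
  rw [intervalIntegral.integral_const_mul, intervalIntegral.integral_mul_const] at m1 m2
  have s1 := intervalIntegral.integral_add_adjacent_intervals hVi hVi'
  have s2 := intervalIntegral.integral_add_adjacent_intervals hi hi'
  have hB0 : 0 ≤ ∫ t in τ..1, levelProfile n k t := by
    rw [intervalIntegral.integral_of_le hτ1.le, integral_Ioc_eq_integral_Ioo]
    exact setIntegral_nonneg measurableSet_Ioo fun t ht =>
      (levelProfile_pos k hn (hτ0.trans ht.1) ht.2).le
  have hA0 : 0 ≤ ∫ t in (0)..τ, levelProfile n k t := by
    rw [intervalIntegral.integral_of_le hτ0.le, integral_Ioc_eq_integral_Ioo]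
    exact setIntegral_nonneg measurableSet_Ioo fun t ht =>
      (levelProfile_pos k hn ht.1 (ht.2.trans hτ1)).le
  have hp := levelProfile_pos k hn hτ0 hτ1
  rw [hA, ← hiS]
  rw [← hT] at s1
  rw [← s2] at hiS1
  change ∫ t in (0)..τ, V t ≤ _
  generalize (∫ t in (0)..τ, V t) = A at *
  generalize (∫ t in τ..1, V t) = B at *
  generalize (∫ t in (0)..τ, levelProfile n k t) = A0 at *
  generalize (∫ t in τ..1, levelProfile n k t) = B0 at *
  -- Eliminating `V τ` from `m1`, `m2` compares the two ratios.
  have c1 : A * B0 ≤ A0 * B := by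
    have a1 := mul_le_mul_of_nonneg_right m1 hB0
    have a2 := mul_le_mul_of_nonneg_left m2 hA0
    refine le_of_mul_le_mul_left ?_ hp
    linarith
  have c2 : A * (A0 + B0) ≤ A0 := by
    have : B = 1 - A := by linarith
    rw [this] at c1
    linarith
  calc A = K * (A * (A0 + B0)) := by linear_combination -A * hiS1
    _ ≤ K * A0 := mul_le_mul_of_nonneg_left c2 hK.le

/-! ### Sharpness -/

/-- Dilating `h` to total mass one. In dimension zero no dilation is available or needed. -/
lemma exists_normalized {n k : ℕ} {h : (Fin k → ℝ) → ℝ} (h0 : ∀ x, 0 ≤ h x)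
    (hpos : 0 < ∫ x, h x) (hc : IsBetaConcave k n h) (hsup : IsLUB (range h) 1) (τ : ℝ) :
    ∃ f : (Fin k → ℝ) → ℝ, (∀ x, 0 ≤ f x) ∧ (∫ x, f x) = 1 ∧
        IsBetaConcave k (n : ℝ) f ∧ IsLUB (range f) 1 ∧
        (∫ x, min (h x) τ) / (∫ x, h x) = ∫ x, min (f x) τ := by
  obtain ⟨a, ha, hak⟩ : ∃ a : ℝ, 0 < a ∧ a ^ k = ∫ x, h x := by
    rcases Nat.eq_zero_or_pos k with rfl | hk
    · refine ⟨1, one_pos, ?_⟩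
      have hr : range h = {h 0} :=
        range_eq_singleton_iff.2 fun x => congrArg h (Subsingleton.elim x 0)
      rw [hr] at hsup
      rw [Measure.volume_pi_eq_dirac 0, integral_dirac, pow_zero]
      exact hsup.unique isLUB_singleton
    · exact ⟨(∫ x, h x) ^ (k : ℝ)⁻¹, Real.rpow_pos_of_pos hpos _,
        Real.rpow_inv_natCast_pow hpos.le hk.ne'⟩
  have hsc : ∀ F : (Fin k → ℝ) → ℝ, ∫ x, F (a • x) = (∫ x, F x) / ∫ x, h x := by
    intro F
    rw [Measure.integral_comp_smul, Module.finrank_fin_fun, hak, abs_of_pos (by positivity),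
      smul_eq_mul, div_eq_inv_mul]
  refine ⟨fun x => h (a • x), fun x => h0 _, ?_, ?_, ?_, ?_⟩
  · rw [hsc, div_self hpos.ne']
  · obtain ⟨D, g, hg, hgD, hD⟩ := hc
    refine ⟨_, _, hg.comp_linearMap (LinearMap.lsmul ℝ (Fin k → ℝ) a), ?_, ?_⟩
    · intro x hx; exact hgD _ hx
    · intro x hx; exact hD _ hx
  · have : range (fun x => h (a • x)) = range h :=
      (MulAction.surjective₀ ha.ne').range_comp h
    rwa [this]
  · exact (hsc fun x => min (h x) τ).symm

/-- The radial function `(1 + ‖x‖) ^ (-n)`, set to zero outside `D`. -/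
noncomputable def radial (n k : ℕ) (D : Set (Fin k → ℝ)) : (Fin k → ℝ) → ℝ :=
  D.indicator fun x => (1 + ‖x‖) ^ (-(n : ℝ))

lemma radial_nonneg (n k : ℕ) (D : Set (Fin k → ℝ)) (x) : 0 ≤ radial n k D x :=
  indicator_nonneg (fun x _ => by positivity) x

lemma one_add_norm_rpow_le (n k : ℕ) (x : Fin k → ℝ) : (1 + ‖x‖) ^ (-(n : ℝ)) ≤ 1 :=
  Real.rpow_le_one_of_one_le_of_nonpos (by linarith [norm_nonneg x]) (by simp)

lemma radial_concave (n k : ℕ) {D : Set (Fin k → ℝ)} (hD : Convex ℝ D) :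
    IsBetaConcave k n (radial n k D) := by
  refine ⟨D, fun x => 1 + ‖x‖, ?_, ?_, ?_⟩
  · exact (convexOn_const 1 hD).add (convexOn_norm hD)
  · intro x hx
    exact ⟨by positivity, by simp [radial, hx]⟩
  · intro x hx; simp [radial, hx]

lemma radial_isLUB (n k : ℕ) {D : Set (Fin k → ℝ)} (hD : 0 ∈ D) :
    IsLUB (range (radial n k D)) 1 := by
  refine IsGreatest.isLUB ⟨⟨0, by simp [radial, hD]⟩, ?_⟩
  rintro _ ⟨x, rfl⟩
  by_cases hx : x ∈ D
  · simpa [radial, hx] using one_add_norm_rpow_le n k x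
  · simp [radial, hx]

lemma lt_one_add_norm_rpow_iff {n k : ℕ} (hn : 1 ≤ n) {t : ℝ} (ht : 0 < t) (x : Fin k → ℝ) :
    t < (1 + ‖x‖) ^ (-(n : ℝ)) ↔ ‖x‖ < t ^ (-(n : ℝ))⁻¹ - 1 := by
  have hn0 : (0 : ℝ) < n := by exact_mod_cast hn
  rw [← Real.lt_rpow_inv_iff_of_neg (by positivity) ht (by linarith)]
  constructor <;> intro h <;> linarith

/-- For `k < n` the radial function on all of `ℝ^k` attains the binomial CDF. -/
lemma radial_ratio {n k : ℕ} (hk : k < n) {τ : ℝ} (hτ0 : 0 < τ) (hτ1 : τ < 1) :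
    0 < ∫ x, radial n k univ x ∧
    (∫ x, min (radial n k univ x) τ) / (∫ x, radial n k univ x)
      = binomSum n k (τ ^ (n : ℝ)⁻¹) := by
  have hn : 1 ≤ n := by omega
  have hint : Integrable (radial n k univ) := by
    simp only [radial, indicator_univ]
    exact integrable_one_add_norm (by simpa using hk)
  obtain ⟨K, hK, hprof⟩ := integral_levelProfile hk
  have hval : ∀ σ : ℝ, 0 < σ → σ ≤ 1 → ∫ x, min (radial n k univ x) σ
      = 2 ^ k / K * binomSum n k (σ ^ (n : ℝ)⁻¹) := by
    intro σ h0 h1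
    rw [integral_min_eq hint (radial_nonneg n k _) h0, ← (hprof σ h0 h1).2]
    have : ∀ t ∈ Ioo 0 σ, volume.real {x | t < radial n k univ x}
        = 2 ^ k * levelProfile n k t := by
      intro t ht
      have hs := one_lt_rpow_of_lt_one hn ht.1 (ht.2.trans_le h1)
      have e : {x | t < radial n k univ x} = Metric.ball 0 (t ^ (-(n : ℝ))⁻¹ - 1) := by
        ext x
        simp only [radial, indicator_univ, mem_ofPred_eq, mem_ball_zero_iff]
        exact lt_one_add_norm_rpow_iff hn ht.1 x
      rw [e, Measure.real, Real.volume_pi_ball _ (by linarith), ENNReal.toReal_ofReal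
        (pow_nonneg (by linarith) _), Fintype.card_fin, mul_pow, levelProfile]
    rw [intervalIntegral.integral_of_le h0.le, integral_Ioc_eq_integral_Ioo,
      setIntegral_congr_fun measurableSet_Ioo this, ← integral_Ioc_eq_integral_Ioo,
      ← intervalIntegral.integral_of_le h0.le, intervalIntegral.integral_const_mul]
    field_simp
  have h1 : ∫ x, radial n k univ x = 2 ^ k / K := by
    have := hval 1 one_pos le_rfl
    simp only [min_eq_left ((radial_isLUB n k (mem_univ 0)).1 ⟨_, rfl⟩), Real.one_rpow,
      binomSum_one, mul_one] at this
    exact this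
  refine ⟨by rw [h1]; positivity, ?_⟩
  rw [h1, hval τ hτ0 hτ1.le]
  field_simp

lemma continuous_one_add_norm_rpow (n k : ℕ) :
    Continuous fun x : Fin k → ℝ => (1 + ‖x‖) ^ (-(n : ℝ)) := by
  refine Continuous.rpow_const (by fun_prop) fun x => Or.inl ?_
  positivity

/-- In polar coordinates the integrand is at least `2 ^ (-n) / y` for `y > 1`. -/
lemma not_integrable_one_add_norm_rpow {n k : ℕ} (hn : 1 ≤ n) (hk : n ≤ k) :
    ¬ Integrable fun x : Fin k → ℝ => (1 + ‖x‖) ^ (-(n : ℝ)) := by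
  intro h
  have : Nonempty (Fin k) := ⟨⟨0, by omega⟩⟩
  rw [integrable_fun_norm_addHaar volume (f := fun y : ℝ => (1 + y) ^ (-(n : ℝ))),
    Module.finrank_fin_fun] at h
  have h' := (h.mono_set (Ioi_subset_Ioi zero_le_one)).const_mul (2 ^ n)
  refine not_integrableOn_Ioi_inv (a := 1) (h'.mono' (by fun_prop) ?_)
  refine (ae_restrict_mem measurableSet_Ioi).mono fun y hy => ?_
  have hy1 : (1 : ℝ) < y := hy
  have hy0 : 0 < y := by linarith
  rw [Real.norm_of_nonneg (by positivity), smul_eq_mul, Real.rpow_neg (by linarith),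
    Real.rpow_natCast]
  have e1 : (1 + y) ^ n ≤ 2 ^ n * y ^ n := by
    rw [← mul_pow]
    exact pow_le_pow_left₀ (by linarith) (by linarith) n
  have e2 : y ^ n ≤ y ^ (k - 1) * y := by
    rw [← pow_succ]
    exact pow_le_pow_right₀ hy1.le (by omega)
  have hpos : 0 < (1 + y) ^ n := by positivity
  rw [inv_le_iff_one_le_mul₀ hy0, ← div_eq_mul_inv, ← mul_div_assoc, div_mul_eq_mul_div,
    one_le_div hpos]
  calc (1 + y) ^ n ≤ 2 ^ n * y ^ n := e1
    _ ≤ 2 ^ n * (y ^ (k - 1) * y) := by gcongr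
    _ = _ := by ring

/-- For `k ≥ n`, truncations of the radial function to large balls have ratio close to `1`. -/
lemma radial_ball_ratio {n k : ℕ} (hn : 1 ≤ n) (hk : n ≤ k) {τ : ℝ} (hτ0 : 0 < τ)
    {ε : ℝ} (hε : 0 < ε) :
    ∃ r : ℝ, 0 < r ∧ 0 < ∫ x, radial n k (Metric.ball 0 r) x ∧
      1 - ε ≤ (∫ x, min (radial n k (Metric.ball 0 r) x) τ) /
        (∫ x, radial n k (Metric.ball 0 r) x) := by
  -- `C` bounds the mass of `h - min h τ` for every truncation `h`.
  set M : Set (Fin k → ℝ) := Metric.ball 0 (τ ^ (-(n : ℝ))⁻¹ - 1) with hM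
  set C : ℝ := volume.real M with hC
  have hintOn : ∀ r : ℝ, IntegrableOn (fun x : Fin k → ℝ => (1 + ‖x‖) ^ (-(n : ℝ)))
      (Metric.ball 0 r) := fun r =>
    ((continuous_one_add_norm_rpow n k).continuousOn.integrableOn_compact
      (isCompact_closedBall 0 r)).mono_set Metric.ball_subset_closedBall
  obtain ⟨r, hr0, hr⟩ : ∃ r : ℝ, 0 < r ∧ max 0 (C / ε) <
      ∫ x in Metric.ball (0 : Fin k → ℝ) r, (1 + ‖x‖) ^ (-(n : ℝ)) := by
    by_contra! hcon
    refine not_integrable_one_add_norm_rpow hn hk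
      ((aecover_ball (x := (0 : Fin k → ℝ)) tendsto_id).integrable_of_integral_norm_bounded
        (max 0 (C / ε)) (l := atTop) hintOn ?_)
    filter_upwards [eventually_gt_atTop (0 : ℝ)] with r hr
    refine le_of_eq_of_le ?_ (hcon r hr)
    refine integral_congr_ae (Eventually.of_forall fun x => ?_)
    exact Real.norm_of_nonneg (by positivity)
  have hI : ∫ x, radial n k (Metric.ball 0 r) x
      = ∫ x in Metric.ball (0 : Fin k → ℝ) r, (1 + ‖x‖) ^ (-(n : ℝ)) :=
    integral_indicator measurableSet_ball
  have hint : Integrable (radial n k (Metric.ball 0 r)) :=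
    (integrable_indicator_iff measurableSet_ball).2 (hintOn r)
  have hmin := integrable_min_const hint (radial_nonneg n k _) hτ0
  have hMint : Integrable (M.indicator fun _ => (1 : ℝ)) :=
    (integrable_indicator_iff measurableSet_ball).2
      (integrableOn_const measure_ball_lt_top.ne)
  have hbd : ∫ x, radial n k (Metric.ball 0 r) x
      ≤ (∫ x, min (radial n k (Metric.ball 0 r) x) τ) + C := by
    have hCi : C = ∫ x, M.indicator (fun _ => (1 : ℝ)) x :=
      (integral_indicator_one measurableSet_ball).symm
    rw [hCi, ← integral_add hmin hMint]
    refine integral_mono hint (hmin.add hMint) fun x => ?_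
    by_cases hx : x ∈ M
    · have h1 := (radial_isLUB n k (Metric.mem_ball_self hr0)).1 ⟨x, rfl⟩
      have h2 := le_min (radial_nonneg n k (Metric.ball 0 r) x) hτ0.le
      simp only [indicator_of_mem hx]
      linarith
    · have h1 : radial n k (Metric.ball 0 r) x ≤ τ := by
        refine (indicator_le_self' (fun x _ => by positivity) x).trans ?_
        rw [← not_lt, lt_one_add_norm_rpow_iff hn hτ0]
        simpa [hM] using hx
      simp [indicator_of_notMem hx, min_eq_left h1]
  rw [← hI] at hr
  have hpos := (le_max_left _ _).trans_lt hr
  have hCε := (div_lt_iff₀ hε).1 ((le_max_right _ _).trans_lt hr)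
  refine ⟨r, hr0, hpos, ?_⟩
  rw [le_div_iff₀ hpos]
  linarith

/-- **Variational representation of the binomial CDF**: for integers `n ≥ 1`, `k ≥ 0` and
real `c > 0`, the supremum of `∫ min{f, e^{-c}}` over all n-concave probability densities
`f` on `ℝ^k` with sup-norm `1` equals `P(Binomial(n, 1 - e^{-c/n}) ≤ k)`. -/
theorem binomial_cdf_variational
    (n k : ℕ) (hn : 1 ≤ n) (c : ℝ) (hc : 0 < c) :
    IsLUB {y : ℝ | ∃ f : (Fin k → ℝ) → ℝ, (∀ x, 0 ≤ f x) ∧ (∫ x, f x) = 1 ∧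
        IsBetaConcave k (n : ℝ) f ∧ IsLUB (Set.range f) 1 ∧
        y = ∫ x, min (f x) (Real.exp (-c))}
      (∑ j ∈ Finset.range (k + 1), (n.choose j : ℝ) *
        (1 - Real.exp (-c / n)) ^ j * Real.exp (-c / n) ^ (n - j)) := by
  have hτ0 := Real.exp_pos (-c)
  have hτ1 : Real.exp (-c) < 1 := Real.exp_lt_one_iff.2 (by linarith)
  have hq : Real.exp (-c / n) = Real.exp (-c) ^ (n : ℝ)⁻¹ := by
    rw [← Real.exp_mul, div_eq_mul_inv]
  change IsLUB _ (binomSum n k (Real.exp (-c / n)))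
  rw [hq]
  refine ⟨?_, fun b hb => ?_⟩
  · rintro y ⟨f, h0, hint, hconc, hsup, rfl⟩
    exact integral_min_le_binomSum hn h0 hint hconc hsup hτ0 hτ1
  · rcases lt_or_ge k n with hk | hk
    · obtain ⟨hpos, hratio⟩ := radial_ratio hk hτ0 hτ1
      rw [← hratio]
      exact hb (exists_normalized (radial_nonneg n k _) hpos (radial_concave n k convex_univ)
        (radial_isLUB n k (mem_univ 0)) _)
    · rw [binomSum_of_le hk]
      refine le_of_forall_pos_sub_le fun ε hε => ?_
      obtain ⟨r, hr, hpos, hratio⟩ := radial_ball_ratio hn hk hτ0 hε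
      exact hratio.trans <| hb (exists_normalized (radial_nonneg n k _) hpos
        (radial_concave n k (convex_ball 0 r))
        (radial_isLUB n k (Metric.mem_ball_self hr)) _)
end

section
/- Let n ≥ 2 and let β ≥ 2n be an integer. Let f be a β-concave probability density on ℝ^n with finite differential entropy h(f), and let f_{n-1}(x^{n-1}) = ∫_ℝ f(x^{n-1}, x_n) dx_n denote the marginal density of the first n−1 coordinates, with differential entropy h(f_{n-1}). Then log ∫_{ℝ^{n-1}} sup_{x_n ∈ ℝ} f(x^{n-1}, x_n) dx^{n-1} ≤ h(f_{n-1}) − h(f) + log n + 2n. -/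
/-!
Write `n = m + 1`, `f = g ^ (-β)` with `g` convex and positive, `g₀ = inf g`, `F = sup f`, and
`M y = sup_z f (y, z)`. The bound is the sum of two inequalities.

* `h(f_{n-1}) ≥ log (∫ M) - log n - log F`. For a convex set `K` in `ℝ^{m} × ℝ` the product of the
  measure of its projection to `ℝ^m` and the length of any vertical section is at most `n * |K|`
  (`rogers_shephard`): contracting the projection towards the base point of the section keeps the
  sections long. Applied to the superlevel sets of `f`, integrated over the level, and decoupled
  with Chebyshev's association inequality, this gives `(∫ M) * f_{n-1} y ≤ n * F` for every `y`
  (`rogers_shephard_functional`), so `-log f_{n-1}` is bounded below pointwise.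

* `h(f) ≤ -log F + 2 * n` (`entropy_bound`), where `-log F = β * log g₀`. Comparing `∫ g ^ (-q)`
  with its image under a slight contraction towards a point `x₁` and using convexity yields
  `(q - n) * ∫ g ^ (-q) ≤ q * g x₁ * ∫ g ^ (-(q + 1))` (`integral_invPow_le`). With `q = β - 1` and
  `q = β` this bounds the mean of `g / g₀` from above and that of `g₀ / g` from below under `f`. An
  upper bound of `log t` by a combination of `1`, `t` and `1 / t`, chosen according to `n` and `β`
  (`exists_log_bound`), then bounds the mean of `log (g / g₀)` by `2 * n / β`.

Integrability of all functions involved, and positivity of `g₀`, follow from the linear growth of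
`g` (`linear_growth`): a point where `g` is small, or a far point where `g` is bounded, would by
convexity force too much mass of `f` near it.
-/

open MeasureTheory

/-- A function `f` on `ℝ^n = ℝ^{n-1} × ℝ` (with `n = m + 1`) is β-concave (β > 0) if
`f(x) = g(x)^{-β}` for some convex function `g : ℝ^n → (0, ∞]`; the effective domain of
`g` is encoded as a convex set `s` on which a positive real-valued convex function `g` is
given, with `f = 0` outside `s`. -/
def IsBetaConcaveProd (m : ℕ) (β : ℝ) (f : ((Fin m → ℝ) × ℝ) → ℝ) : Prop :=
  ∃ (s : Set ((Fin m → ℝ) × ℝ)) (g : ((Fin m → ℝ) × ℝ) → ℝ),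
    ConvexOn ℝ s g ∧ (∀ x ∈ s, 0 < g x ∧ f x = g x ^ (-β)) ∧ ∀ x ∉ s, f x = 0

open scoped ENNReal

/-! ### Measurability of quasi-concave functions -/

section QuasiConcave

variable {E : Type*} [NormedAddCommGroup E] [NormedSpace ℝ E] [FiniteDimensional ℝ E]
  [MeasurableSpace E] [BorelSpace E]

lemma aemeasurable_of_convex_superlevel (μ : Measure E) [μ.IsAddHaarMeasure] {F : E → ℝ}
    (hF : ∀ t : ℝ, Convex ℝ {x | t < F x}) : AEMeasurable F μ := by
  apply NullMeasurable.aemeasurable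
  have h : @Measurable (NullMeasurableSpace E μ) ℝ _ _ F :=
    measurable_of_Ioi fun t => (hF t).nullMeasurableSet μ
  exact fun s hs => h hs

end QuasiConcave

lemma measurable_of_convex_superlevel_real {F : ℝ → ℝ}
    (hF : ∀ t : ℝ, Convex ℝ {x | t < F x}) : Measurable F :=
  measurable_of_Ioi fun t => (hF t).ordConnected.measurableSet

/-! ### A Rogers–Shephard inequality for one-dimensional sections -/

section RogersShephard

variable {m : ℕ}

instance volume_prod_isAddHaarMeasure :
    (volume : Measure ((Fin m → ℝ) × ℝ)).IsAddHaarMeasure := by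
  rw [Measure.volume_eq_prod]; infer_instance

lemma convex_proj {K : Set ((Fin m → ℝ) × ℝ)} (hK : Convex ℝ K) :
    Convex ℝ {y : Fin m → ℝ | ∃ z : ℝ, (y, z) ∈ K} := by
  have : {y : Fin m → ℝ | ∃ z : ℝ, (y, z) ∈ K} = (LinearMap.fst ℝ (Fin m → ℝ) ℝ) '' K := by
    ext y; simp
  rw [this]
  exact hK.linear_image _

lemma convex_section {K : Set ((Fin m → ℝ) × ℝ)} (hK : Convex ℝ K) (y : Fin m → ℝ) :
    Convex ℝ {z : ℝ | (y, z) ∈ K} := by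
  intro z hz w hw a b ha hb hab
  have := hK hz hw ha hb hab
  have hy : a • y + b • y = y := by rw [← add_smul, hab, one_smul]
  simpa [hy] using this

/-- Moving from the section over `y₀` towards a point of `K` over `y` shrinks the section
at most linearly. -/
lemma section_lower {K : Set ((Fin m → ℝ) × ℝ)} (hK : Convex ℝ K) (y₀ y : Fin m → ℝ) (z : ℝ)
    (hz : (y, z) ∈ K) {l : ℝ} (hl0 : 0 ≤ l) (hl1 : l ≤ 1) :
    ENNReal.ofReal (1 - l) * volume {w : ℝ | (y₀, w) ∈ K} ≤
      volume {w : ℝ | (AffineMap.homothety y₀ l y, w) ∈ K} := by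
  have h1 : AffineMap.homothety z (1 - l) '' {w : ℝ | (y₀, w) ∈ K} ⊆
      {w : ℝ | (AffineMap.homothety y₀ l y, w) ∈ K} := by
    rintro _ ⟨w, hw, rfl⟩
    have := hK hw hz (sub_nonneg.2 hl1) hl0 (by ring)
    simp only [Set.mem_ofPred_eq]
    convert this using 1
    ext i
    · simp [AffineMap.homothety_apply]; ring
    · simp [AffineMap.homothety_apply]; ring
  calc _ = volume (AffineMap.homothety z (1 - l) '' {w : ℝ | (y₀, w) ∈ K}) := by
        rw [Measure.addHaar_image_homothety]
        simp [abs_of_nonneg (sub_nonneg.2 hl1)]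
    _ ≤ _ := measure_mono h1

lemma lintegral_one_sub_pow (m : ℕ) {L : ℝ} (hL : 0 < L) :
    ∫⁻ s in Set.Ioc 0 L, ENNReal.ofReal ((1 - s / L) ^ m) = ENNReal.ofReal (L / (m + 1)) := by
  rw [← ofReal_integral_eq_lintegral_ofReal]
  · congr 1
    rw [← intervalIntegral.integral_of_le hL.le]
    have := intervalIntegral.integral_comp_sub_div (a := 0) (b := L) (fun x : ℝ => x ^ m)
      hL.ne' 1
    rw [this]
    simp [hL.ne']
    ring
  · apply (Continuous.integrableOn_Icc (by fun_prop)).mono_set Set.Ioc_subset_Icc_self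
  · filter_upwards [ae_restrict_mem measurableSet_Ioc] with s hs
    have : s / L ≤ 1 := (div_le_one hL).2 hs.2
    exact pow_nonneg (by linarith) _

/-- Rogers–Shephard inequality: for a convex set in dimension `m + 1`, the measure of its
projection along the last axis times the length of any finite section parallel to that axis is at most
`m + 1` times its volume. -/
lemma rogers_shephard {K : Set ((Fin m → ℝ) × ℝ)} (hK : Convex ℝ K) (y₀ : Fin m → ℝ)
    (hfin : volume {w : ℝ | (y₀, w) ∈ K} ≠ ∞) :
    volume {y : Fin m → ℝ | ∃ z : ℝ, (y, z) ∈ K} * volume {w : ℝ | (y₀, w) ∈ K} ≤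
      ((m : ℝ≥0∞) + 1) * volume K := by
  set P := {y : Fin m → ℝ | ∃ z : ℝ, (y, z) ∈ K}
  obtain ⟨L, hL0, hLeq⟩ : ∃ L : ℝ, 0 ≤ L ∧ volume {w : ℝ | (y₀, w) ∈ K} = ENNReal.ofReal L :=
    ⟨_, ENNReal.toReal_nonneg, (ENNReal.ofReal_toReal hfin).symm⟩
  rcases hL0.eq_or_lt with h0 | hL
  · rw [hLeq, ← h0]; simp
  have hKm : NullMeasurableSet K ((volume : Measure (Fin m → ℝ)).prod (volume : Measure ℝ)) :=
    hK.nullMeasurableSet _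
  have hind : AEMeasurable (K.indicator (1 : (Fin m → ℝ) × ℝ → ℝ≥0∞))
      ((volume : Measure (Fin m → ℝ)).prod (volume : Measure ℝ)) :=
    (aemeasurable_indicator_const_iff 1).2 hKm
  have hsec : ∀ y : Fin m → ℝ, ∫⁻ z, K.indicator (1 : (Fin m → ℝ) × ℝ → ℝ≥0∞) (y, z) =
      volume {z : ℝ | (y, z) ∈ K} := by
    intro y
    rw [← lintegral_indicator_one (convex_section hK y).ordConnected.measurableSet]
    rfl
  have hvol : volume K = ∫⁻ y : Fin m → ℝ, volume {z : ℝ | (y, z) ∈ K} := by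
    rw [← lintegral_indicator_one₀ (hK.nullMeasurableSet _), Measure.volume_eq_prod,
      lintegral_prod _ hind]
    simp_rw [hsec]
  have hmeas : AEMeasurable (fun y : Fin m → ℝ => volume {z : ℝ | (y, z) ∈ K}) := by
    have := hind.lintegral_prod_right'
    simpa only [hsec] using this
  set r : (Fin m → ℝ) → ℝ := fun y => (min (volume {z : ℝ | (y, z) ∈ K}) (ENNReal.ofReal L)).toReal
    with hr
  have hrm : AEMeasurable r := (hmeas.min aemeasurable_const).ennreal_toReal
  have hlev : ∀ s ∈ Set.Ioc 0 L,
      ENNReal.ofReal ((1 - s / L) ^ m) * volume P ≤ volume {y | s ≤ r y} := by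
    intro s hs
    have h0 : 0 ≤ 1 - s / L := sub_nonneg.2 ((div_le_one hL).2 hs.2)
    have h1 : 0 ≤ s / L := div_nonneg hs.1.le hL.le
    calc _ = volume (AffineMap.homothety y₀ (1 - s / L) '' P) := by
          rw [Measure.addHaar_image_homothety]
          simp [abs_of_nonneg h0]
      _ ≤ _ := by
          apply measure_mono
          rintro _ ⟨y, ⟨z, hz⟩, rfl⟩
          have := section_lower hK y₀ y z hz h0 (by linarith)
          rw [hLeq, ← ENNReal.ofReal_mul (by linarith)] at this
          simp only [Set.mem_ofPred_eq, hr]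
          rw [← ENNReal.ofReal_le_iff_le_toReal (by simp)]
          refine le_min (le_trans (le_of_eq ?_) this) (ENNReal.ofReal_le_ofReal hs.2)
          congr 1; field_simp; ring
  have key : ENNReal.ofReal (L / (m + 1)) * volume P ≤ volume K := by
    calc _ = ∫⁻ s in Set.Ioc 0 L, ENNReal.ofReal ((1 - s / L) ^ m) * volume P := by
          rw [lintegral_mul_const _ (by fun_prop), lintegral_one_sub_pow m hL]
      _ ≤ ∫⁻ s in Set.Ioc 0 L, volume {y | s ≤ r y} :=
          setLIntegral_mono' measurableSet_Ioc hlev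
      _ ≤ ∫⁻ s in Set.Ioi 0, volume {y | s ≤ r y} :=
          lintegral_mono_set Set.Ioc_subset_Ioi_self
      _ = ∫⁻ y, ENNReal.ofReal (r y) :=
          (lintegral_eq_lintegral_meas_le volume
            (Filter.Eventually.of_forall fun _ => ENNReal.toReal_nonneg) hrm).symm
      _ ≤ volume K := by
          rw [hvol]
          apply lintegral_mono
          intro y
          simp only [hr]
          rw [ENNReal.ofReal_toReal (by simp)]
          exact min_le_left _ _
  calc volume P * volume {w : ℝ | (y₀, w) ∈ K}
      = ((m : ℝ≥0∞) + 1) * (ENNReal.ofReal (L / (m + 1)) * volume P) := by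
        rw [hLeq, ← mul_assoc, mul_comm]
        congr 1
        have : ((m : ℝ≥0∞) + 1) = ENNReal.ofReal ((m : ℝ) + 1) := by
          rw [ENNReal.ofReal_add (by positivity) zero_le_one]; simp
        rw [this, ← ENNReal.ofReal_mul (by positivity)]
        congr 1; field_simp
    _ ≤ _ := by gcongr

/-- Chebyshev's association inequality for antitone functions on an interval. -/
lemma chebyshev_antitone {A B : ℝ → ℝ≥0∞} (hA : Antitone A) (hB : Antitone B) (F : ℝ) :
    (∫⁻ t in Set.Ioc 0 F, A t) * (∫⁻ t in Set.Ioc 0 F, B t) ≤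
      ENNReal.ofReal F * ∫⁻ t in Set.Ioc 0 F, A t * B t := by
  have hAm := hA.measurable
  have hBm := hB.measurable
  set ν := volume.restrict (Set.Ioc (0 : ℝ) F) with hν
  have hν1 : ν Set.univ = ENNReal.ofReal F := by simp [hν]
  have hpt : ∀ s t, A s * B t + A t * B s ≤ A s * B s + A t * B t := by
    intro s t
    rcases le_total s t with h | h
    · obtain ⟨a, ha⟩ := exists_add_of_le (hA h)
      obtain ⟨b, hb⟩ := exists_add_of_le (hB h)
      rw [ha, hb]
      calc _ ≤ (A t + a) * B t + A t * (B t + b) + a * b := le_self_add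
        _ = _ := by ring
    · obtain ⟨a, ha⟩ := exists_add_of_le (hA h)
      obtain ⟨b, hb⟩ := exists_add_of_le (hB h)
      rw [ha, hb]
      calc _ ≤ A s * (B s + b) + (A s + a) * B s + a * b := le_self_add
        _ = _ := by ring
  have hfint : ∫⁻ s, ∫⁻ t, (A s * B t + A t * B s) ∂ν ∂ν ≤
      ∫⁻ s, ∫⁻ t, (A s * B s + A t * B t) ∂ν ∂ν :=
    lintegral_mono fun s => lintegral_mono fun t => hpt s t
  have hl : ∫⁻ s, ∫⁻ t, (A s * B t + A t * B s) ∂ν ∂ν =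
      2 * ((∫⁻ t, A t ∂ν) * ∫⁻ t, B t ∂ν) := by
    have : ∀ s, ∫⁻ t, (A s * B t + A t * B s) ∂ν =
        A s * (∫⁻ t, B t ∂ν) + (∫⁻ t, A t ∂ν) * B s := by
      intro s
      rw [lintegral_add_left (by fun_prop), lintegral_const_mul _ hBm, lintegral_mul_const _ hAm]
    simp_rw [this]
    rw [lintegral_add_left (by fun_prop), lintegral_const_mul _ hBm, lintegral_mul_const _ hAm]
    ring
  have hr : ∫⁻ s, ∫⁻ t, (A s * B s + A t * B t) ∂ν ∂ν =
      2 * (ENNReal.ofReal F * ∫⁻ t, A t * B t ∂ν) := by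
    have : ∀ s, ∫⁻ t, (A s * B s + A t * B t) ∂ν =
        A s * B s * ENNReal.ofReal F + ∫⁻ t, A t * B t ∂ν := by
      intro s
      rw [lintegral_add_left (by fun_prop), lintegral_const, hν1]
    simp_rw [this]
    rw [lintegral_add_left (by fun_prop), lintegral_mul_const _ (by fun_prop), lintegral_const,
      hν1]
    ring
  rw [hl, hr] at hfint
  exact (ENNReal.mul_le_mul_iff_right (by simp) (by simp)).1 hfint

/-- Layer-cake formula for a function with values in `[0, F]`. -/
lemma layer_cake {α : Type*} [MeasurableSpace α] (μ : Measure α) {f : α → ℝ} {F : ℝ}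
    (h0 : ∀ x, 0 ≤ f x) (hF : ∀ x, f x ≤ F) (hm : AEMeasurable f μ) :
    ∫⁻ x, ENNReal.ofReal (f x) ∂μ = ∫⁻ t in Set.Ioc 0 F, μ {x | t < f x} := by
  rw [lintegral_eq_lintegral_meas_lt μ (Filter.Eventually.of_forall h0) hm]
  rcases lt_or_ge F 0 with hF0 | hF0
  · have : IsEmpty α := ⟨fun x => by linarith [h0 x, hF x]⟩
    have : μ = 0 := Measure.eq_zero_of_isEmpty μ
    simp [this]
  rw [← Set.Ioc_union_Ioi_eq_Ioi hF0, lintegral_union measurableSet_Ioi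
    (Set.Ioc_disjoint_Ioi le_rfl)]
  rw [setLIntegral_congr_fun (g := fun _ => 0) measurableSet_Ioi, lintegral_zero, add_zero]
  intro t ht
  have : {x | t < f x} = ∅ := by
    ext x
    simp only [Set.mem_ofPred_eq, Set.mem_empty_iff_false, iff_false, not_lt]
    exact (hF x).trans (le_of_lt ht)
  simp [this]

/-- Functional Rogers–Shephard inequality for a bounded quasi-concave function: integrate the
inequality for the superlevel sets and decouple by Chebyshev's association inequality. -/
lemma rogers_shephard_functional {f : (Fin m → ℝ) × ℝ → ℝ} {F : ℝ}
    (h0 : ∀ x, 0 ≤ f x) (hF : ∀ x, f x ≤ F)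
    (hconv : ∀ t : ℝ, Convex ℝ {x | t < f x}) (y₀ : Fin m → ℝ)
    (hfin : ∀ t : ℝ, 0 < t → volume {w : ℝ | t < f (y₀, w)} ≠ ∞) :
    (∫⁻ y : Fin m → ℝ, ENNReal.ofReal (⨆ z : ℝ, f (y, z))) *
      (∫⁻ z : ℝ, ENNReal.ofReal (f (y₀, z))) ≤
      ((m : ℝ≥0∞) + 1) * (ENNReal.ofReal F * ∫⁻ x, ENNReal.ofReal (f x)) := by
  have hbdd : ∀ y, BddAbove (Set.range fun z : ℝ => f (y, z)) := fun y =>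
    ⟨F, by rintro _ ⟨z, rfl⟩; exact hF _⟩
  have hset : ∀ t, {y : Fin m → ℝ | t < ⨆ z : ℝ, f (y, z)} =
      {y | ∃ z : ℝ, (y, z) ∈ {x | t < f x}} := by
    intro t; ext y
    exact lt_ciSup_iff (hbdd y)
  have hMm : AEMeasurable (fun y : Fin m → ℝ => ⨆ z : ℝ, f (y, z)) :=
    aemeasurable_of_convex_superlevel _ fun t => by
      rw [hset t]; exact convex_proj (hconv t)
  have hsm : Measurable fun z : ℝ => f (y₀, z) :=
    measurable_of_convex_superlevel_real fun t => convex_section (hconv t) y₀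
  rw [layer_cake volume (F := F) (fun y => Real.iSup_nonneg fun z => h0 _)
      (fun y => ciSup_le fun z => hF _) hMm,
    layer_cake volume (F := F) (fun z => h0 _) (fun z => hF _) hsm.aemeasurable,
    layer_cake volume (F := F) h0 hF (aemeasurable_of_convex_superlevel _ hconv)]
  refine (chebyshev_antitone ?_ ?_ F).trans ?_
  · intro s t hst
    exact measure_mono fun x hx => lt_of_le_of_lt hst hx
  · intro s t hst
    exact measure_mono fun x hx => lt_of_le_of_lt hst hx
  rw [mul_left_comm]
  gcongr
  rw [← lintegral_const_mul' _ _ (by simp)]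
  apply setLIntegral_mono' measurableSet_Ioc
  intro t ht
  rw [hset t]
  exact rogers_shephard (hconv t) y₀ (hfin t ht.1)

end RogersShephard

/-! ### Powers of a positive convex function -/

section Powers

variable {E : Type*}

/-- The function `g ^ (-q)` on `s`, extended by `0`; it represents `g ^ (-q)` for the extended
function that equals `∞` off `s`. -/
noncomputable def invPow (s : Set E) (g : E → ℝ) (q : ℕ) : E → ℝ :=
  s.indicator fun x => (g x ^ q)⁻¹

lemma invPow_of_mem {s : Set E} {g : E → ℝ} {q : ℕ} {x : E} (hx : x ∈ s) :
    invPow s g q x = (g x ^ q)⁻¹ := Set.indicator_of_mem hx _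

lemma invPow_of_notMem {s : Set E} {g : E → ℝ} {q : ℕ} {x : E} (hx : x ∉ s) :
    invPow s g q x = 0 := Set.indicator_of_notMem hx _

lemma invPow_nonneg {s : Set E} {g : E → ℝ} {q : ℕ} (hpos : ∀ x ∈ s, 0 < g x) (x : E) :
    0 ≤ invPow s g q x :=
  Set.indicator_nonneg (fun x hx => inv_nonneg.2 (pow_nonneg (hpos x hx).le _)) x

lemma invPow_le_of_growth {E : Type*} [NormedAddCommGroup E] {s : Set E} {g : E → ℝ}
    {c : ℝ} (hc : 0 < c) (hgr : ∀ x ∈ s, c * (1 + ‖x‖) ≤ g x) (q : ℕ) (x : E) :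
    invPow s g q x ≤ (c ^ q)⁻¹ * (1 + ‖x‖) ^ (-(q : ℝ)) := by
  have h1 : 0 < 1 + ‖x‖ := by positivity
  rw [Real.rpow_neg h1.le, Real.rpow_natCast]
  by_cases hx : x ∈ s
  · rw [invPow_of_mem hx, ← mul_inv, ← mul_pow]
    have := hgr x hx
    gcongr
  · rw [invPow_of_notMem hx]; positivity

variable [NormedAddCommGroup E] [NormedSpace ℝ E]

lemma convex_superlevel_invPow {s : Set E} {g : E → ℝ} (hg : ConvexOn ℝ s g)
    (hpos : ∀ x ∈ s, 0 < g x) (q : ℕ) (t : ℝ) : Convex ℝ {x | t < invPow s g q x} := by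
  rcases lt_or_ge t 0 with ht | ht
  · have : {x | t < invPow s g q x} = Set.univ :=
      Set.eq_univ_of_forall fun x => lt_of_lt_of_le ht (invPow_nonneg hpos x)
    rw [this]; exact convex_univ
  have hmem : ∀ {x}, t < invPow s g q x → x ∈ s := by
    intro x hx
    by_contra h
    rw [invPow_of_notMem h] at hx
    linarith
  intro x hx y hy a b ha hb hab
  have hxs := hmem hx
  have hys := hmem hy
  have hz := hg.1 hxs hys ha hb hab
  have hle := hg.2 hxs hys ha hb hab
  simp only [Set.mem_ofPred_eq, invPow_of_mem hxs, invPow_of_mem hys] at hx hy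
  simp only [Set.mem_ofPred_eq, invPow_of_mem hz]
  have hpz := hpos _ hz
  simp only [smul_eq_mul] at hle
  rcases le_total (g x) (g y) with h | h
  · have : g (a • x + b • y) ≤ g y := by nlinarith
    exact lt_of_lt_of_le hy (by gcongr)
  · have : g (a • x + b • y) ≤ g x := by nlinarith
    exact lt_of_lt_of_le hx (by gcongr)

variable [FiniteDimensional ℝ E] [MeasurableSpace E] [BorelSpace E]
  {μ : Measure E} [μ.IsAddHaarMeasure]

/-- A positive convex function whose power `-β`, with `β` above the dimension, is integrable
grows at least linearly and is bounded away from zero. -/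
lemma linear_growth {s : Set E} {g : E → ℝ} (hg : ConvexOn ℝ s g)
    (hpos : ∀ x ∈ s, 0 < g x) {β : ℕ} (hβ : Module.finrank ℝ E < β)
    (hfint : Integrable (invPow s g β) μ) (hI : 0 < ∫ x, invPow s g β x ∂μ) :
    ∃ c > 0, ∀ x ∈ s, c * (1 + ‖x‖) ≤ g x := by
  have hμs : μ s ≠ 0 := by
    intro h
    have : invPow s g β =ᵐ[μ] 0 := by
      filter_upwards [measure_eq_zero_iff_ae_notMem.1 h] with x hx
      exact invPow_of_notMem hx
    rw [integral_congr_ae this] at hI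
    simp at hI
  have hne : (interior s).Nonempty := by
    by_contra h
    rw [Set.not_nonempty_iff_eq_empty] at h
    apply hμs
    refine measure_mono_null ?_ (hg.1.addHaar_frontier μ)
    rw [frontier, h, Set.sdiff_empty]
    exact subset_closure
  obtain ⟨x₀, hx₀⟩ := hne
  have hcont : ContinuousAt g x₀ :=
    ((hg.subset interior_subset hg.1.interior).continuousOn isOpen_interior).continuousAt
      (isOpen_interior.mem_nhds hx₀)
  set A := g x₀ + 1 with hA
  have hx₀s := interior_subset hx₀
  have hA1 : 1 < A := by linarith [hpos x₀ hx₀s]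
  obtain ⟨r, hr, hball⟩ : ∃ r > 0, ∀ p ∈ Metric.ball x₀ r, p ∈ s ∧ g p < A := by
    have h0 : ∀ᶠ p in nhds x₀, p ∈ s := mem_interior_iff_mem_nhds.1 hx₀
    have h1 : ∀ᶠ p in nhds x₀, p ∈ s ∧ g p < A :=
      h0.and (hcont.eventually_lt_const (by linarith))
    obtain ⟨r, hr, h⟩ := Metric.eventually_nhds_iff_ball.1 h1
    exact ⟨r, hr, h⟩
  have hcone : ∀ x ∈ s, ∀ l : ℝ, 0 < l → l ≤ 1 →
      ∀ p ∈ Metric.ball ((1 - l) • x + l • x₀) (l * r), p ∈ s ∧ g p ≤ (1 - l) * g x + l * A := by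
    intro x hx l hl0 hl1 p hp
    set b := x₀ + l⁻¹ • (p - ((1 - l) • x + l • x₀)) with hb
    have hbm : b ∈ Metric.ball x₀ r := by
      rw [mem_ball_iff_norm] at hp ⊢
      rw [hb, add_sub_cancel_left, norm_smul, norm_inv, Real.norm_of_nonneg hl0.le,
        inv_mul_lt_iff₀ hl0]
      exact hp
    have hpb : p = (1 - l) • x + l • b := by
      rw [hb, smul_add, smul_smul, mul_inv_cancel₀ hl0.ne', one_smul]; abel
    obtain ⟨hbs, hbA⟩ := hball b hbm
    rw [hpb]
    refine ⟨hg.1 hx hbs (by linarith) hl0.le (by ring), ?_⟩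
    have := hg.2 hx hbs (by linarith : 0 ≤ 1 - l) hl0.le (by ring)
    simp only [smul_eq_mul] at this
    nlinarith
  set V := μ.real (Metric.ball (0 : E) 1) with hV
  have hVpos : 0 < V := by
    refine ENNReal.toReal_pos (Metric.measure_ball_pos μ _ one_pos).ne' measure_ball_lt_top.ne
  have hvol : ∀ (c : E) (ρ : ℝ), 0 < ρ →
      μ.real (Metric.ball c ρ) = ρ ^ Module.finrank ℝ E * V := by
    intro c ρ hρ
    rw [measureReal_def, Measure.addHaar_ball_of_pos μ c hρ, ENNReal.toReal_mul,
      ENNReal.toReal_ofReal (by positivity)]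
    rfl
  have hmass : ∀ (c : E) (ρ v : ℝ) (S : Set E), MeasurableSet S → 0 < ρ → 0 < v →
      Metric.ball c ρ ⊆ S →
      (∀ p ∈ Metric.ball c ρ, p ∈ s ∧ g p ≤ v) →
      ρ ^ Module.finrank ℝ E * V * (v ^ β)⁻¹ ≤ ∫ x in S, invPow s g β x ∂μ := by
    intro c ρ v S hS hρ hv hsub h
    calc _ = ∫ x in Metric.ball c ρ, (v ^ β)⁻¹ ∂μ := by
          rw [setIntegral_const, hvol c ρ hρ, smul_eq_mul]
      _ ≤ ∫ x in Metric.ball c ρ, invPow s g β x ∂μ := by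
          apply setIntegral_mono_on (by simp [measure_ball_lt_top]) hfint.integrableOn
            measurableSet_ball
          intro p hp
          obtain ⟨hps, hpv⟩ := h p hp
          rw [invPow_of_mem hps]
          have := hpos p hps
          gcongr
      _ ≤ _ := setIntegral_mono_set hfint.integrableOn
          (Filter.Eventually.of_forall fun x => invPow_nonneg hpos x)
          (Filter.Eventually.of_forall hsub)
  set I := ∫ x, invPow s g β x ∂μ with hIdef
  -- a small value of `g` at `x` would put too much mass near `x`
  have hlow : ∀ x ∈ s, min 1 (r ^ Module.finrank ℝ E * V / ((1 + A) ^ β * I)) ≤ g x := by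
    intro x hx
    rcases le_or_gt 1 (g x) with h1 | h1
    · exact (min_le_left _ _).trans h1
    refine (min_le_right _ _).trans ?_
    have hl := hpos x hx
    have h := hmass _ (g x * r) (g x * (1 + A)) Set.univ MeasurableSet.univ (by positivity)
      (by positivity) (Set.subset_univ _) (fun p hp => by
        obtain ⟨h2, h3⟩ := hcone x hx (g x) hl h1.le p hp
        exact ⟨h2, h3.trans (by nlinarith)⟩)
    rw [setIntegral_univ, ← hIdef, mul_pow, mul_pow] at h
    obtain ⟨k, hk⟩ := Nat.exists_eq_add_of_lt hβ
    have hle : g x ^ β ≤ g x ^ Module.finrank ℝ E * g x := by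
      rw [← pow_succ]
      exact pow_le_pow_of_le_one hl.le h1.le hβ
    rw [div_le_iff₀ (by positivity)]
    have hd : 0 < g x ^ Module.finrank ℝ E := by positivity
    rw [← div_eq_mul_inv, div_le_iff₀ (by positivity)] at h
    have h4 : g x ^ β * (1 + A) ^ β * I ≤ g x ^ Module.finrank ℝ E * g x * (1 + A) ^ β * I := by
      gcongr
    have h5 : g x ^ Module.finrank ℝ E * (r ^ Module.finrank ℝ E * V) ≤
        g x ^ Module.finrank ℝ E * (g x * ((1 + A) ^ β * I)) := by
      calc _ = g x ^ Module.finrank ℝ E * r ^ Module.finrank ℝ E * V := by ring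
        _ ≤ I * (g x ^ β * (1 + A) ^ β) := h
        _ = g x ^ β * (1 + A) ^ β * I := by ring
        _ ≤ _ := h4
        _ = _ := by ring
    exact le_of_mul_le_mul_left h5 hd
  set c₂ := min 1 (r ^ Module.finrank ℝ E * V / ((1 + A) ^ β * I)) with hc₂
  have hc₂pos : 0 < c₂ := lt_min one_pos (by positivity)
  -- a sublevel set is bounded: a far point of it would put a fixed mass far away from `x₀`
  obtain ⟨D, hD, hfar⟩ : ∃ D > 0, ∀ x ∈ s, D ≤ ‖x - x₀‖ → A + 1 < g x := by
    set κ := (1 / 2 * r) ^ Module.finrank ℝ E * V * ((A + 1) ^ β)⁻¹ with hκ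
    have hκpos : 0 < κ := by positivity
    have htail : Filter.Tendsto
        (fun N : ℕ => ∫ x in (Metric.ball x₀ (N : ℝ))ᶜ, invPow s g β x ∂μ) Filter.atTop
        (nhds (∫ x in ⋂ N : ℕ, (Metric.ball x₀ (N : ℝ))ᶜ, invPow s g β x ∂μ)) := by
      apply tendsto_setIntegral_of_antitone (fun N => measurableSet_ball.compl)
      · intro a b hab
        exact Set.compl_subset_compl.2 (Metric.ball_subset_ball (by exact_mod_cast hab))
      · exact ⟨0, hfint.integrableOn⟩
    have hempty : ⋂ N : ℕ, (Metric.ball x₀ (N : ℝ))ᶜ = ∅ := by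
      rw [← Set.compl_iUnion, Metric.iUnion_ball_nat, Set.compl_univ]
    rw [hempty, setIntegral_empty] at htail
    obtain ⟨N, hN⟩ := (htail.eventually_lt_const hκpos).exists
    refine ⟨2 * N + r, by positivity, fun x hx hxD => ?_⟩
    by_contra! hcon
    refine absurd hN (not_lt.2 ?_)
    refine hmass ((1 - (1 / 2 : ℝ)) • x + (1 / 2 : ℝ) • x₀) (1 / 2 * r) (A + 1) _
      measurableSet_ball.compl (by positivity) (by linarith) ?_ ?_
    · intro p hp hp'
      rw [mem_ball_iff_norm] at hp hp'
      have h1 : x - x₀ = (2 : ℝ) • ((p - x₀) - (p - ((1 - (1 / 2 : ℝ)) • x + (1 / 2 : ℝ) • x₀))) := by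
        module
      have h2 : ‖x - x₀‖ ≤ 2 * (‖p - x₀‖ +
          ‖p - ((1 - (1 / 2 : ℝ)) • x + (1 / 2 : ℝ) • x₀)‖) := by
        rw [h1, norm_smul, Real.norm_of_nonneg zero_le_two]
        gcongr
        exact norm_sub_le _ _
      linarith
    · intro p hp
      obtain ⟨h2, h3⟩ := hcone x hx (1 / 2) (by norm_num) (by norm_num) p hp
      exact ⟨h2, by linarith⟩
  have hlin : ∀ x ∈ s, D ≤ ‖x - x₀‖ → ‖x - x₀‖ / D ≤ g x := by
    intro x hx hxD
    have hρ : 0 < ‖x - x₀‖ := hD.trans_le hxD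
    set τ := D / ‖x - x₀‖ with hτ
    have hτ0 : 0 < τ := by positivity
    have hτ1 : τ ≤ 1 := (div_le_one hρ).2 hxD
    have hps := hg.1 hx₀s hx (sub_nonneg.2 hτ1) hτ0.le (by ring)
    have hple := hg.2 hx₀s hx (sub_nonneg.2 hτ1) hτ0.le (by ring)
    have hpn : ‖((1 - τ) • x₀ + τ • x) - x₀‖ = D := by
      have : ((1 - τ) • x₀ + τ • x) - x₀ = τ • (x - x₀) := by module
      rw [this, norm_smul, Real.norm_of_nonneg hτ0.le, hτ, div_mul_cancel₀ _ hρ.ne']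
    have := hfar _ hps hpn.ge
    simp only [smul_eq_mul] at hple
    have h1 : 1 ≤ τ * g x := by nlinarith [hpos x₀ hx₀s]
    rw [hτ] at h1
    rw [div_le_iff₀ hD]
    rw [div_mul_eq_mul_div, le_div_iff₀ hρ] at h1
    linarith
  set H := 1 + ‖x₀‖ with hH
  have hHpos : 0 < H := by positivity
  refine ⟨c₂ / (H + D), by positivity, fun x hx => ?_⟩
  have hnx : 1 + ‖x‖ ≤ H + ‖x - x₀‖ := by
    have : ‖x‖ ≤ ‖x₀‖ + ‖x - x₀‖ := by simpa using norm_add_le x₀ (x - x₀)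
    linarith
  rw [div_mul_eq_mul_div, div_le_iff₀ (by positivity)]
  rcases lt_or_ge ‖x - x₀‖ D with h | h
  · have := hlow x hx
    calc c₂ * (1 + ‖x‖) ≤ c₂ * (H + D) := mul_le_mul_of_nonneg_left (by linarith) hc₂pos.le
      _ ≤ _ := by gcongr
  · have h1 := hlin x hx h
    have h2 : c₂ ≤ 1 := min_le_left _ _
    calc c₂ * (1 + ‖x‖) ≤ 1 * (H + ‖x - x₀‖) := by gcongr
      _ ≤ ‖x - x₀‖ / D * (H + D) := by
        rw [one_mul, div_mul_eq_mul_div, le_div_iff₀ hD]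
        nlinarith
      _ ≤ _ := by gcongr

lemma integrable_invPow {s : Set E} {g : E → ℝ} (hg : ConvexOn ℝ s g)
    (hpos : ∀ x ∈ s, 0 < g x) {c : ℝ} (hc : 0 < c)
    (hgr : ∀ x ∈ s, c * (1 + ‖x‖) ≤ g x) {q : ℕ} (hq : Module.finrank ℝ E < q) :
    Integrable (invPow s g q) μ := by
  refine ((integrable_one_add_norm (r := (q : ℝ)) (by exact_mod_cast hq)).const_mul
    (c ^ q)⁻¹).mono' ?_ ?_
  · exact (aemeasurable_of_convex_superlevel μ
      (convex_superlevel_invPow hg hpos q)).aestronglyMeasurable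
  · refine Filter.Eventually.of_forall fun x => ?_
    rw [Real.norm_of_nonneg (invPow_nonneg hpos x)]
    exact invPow_le_of_growth hc hgr q x

/-- The tangent-line inequality for `v ↦ v ^ (-q)` at `a`, combined with monotonicity. -/
lemma inv_pow_tangent {a b v ε : ℝ} (ha : 0 < a) (hv : 0 < v)
    (hva : v ≤ a - ε * (a - b)) (q : ℕ) :
    (1 + ε * q) * (a ^ q)⁻¹ - ε * q * b * (a ^ (q + 1))⁻¹ ≤ (v ^ q)⁻¹ := by
  set θ := ε * (1 - b / a) with hθ
  have hvθ : v ≤ a * (1 - θ) := by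
    refine hva.trans (le_of_eq ?_)
    rw [hθ]; field_simp
  have h1θ : 0 < 1 - θ := by
    by_contra! h
    nlinarith
  have hx : 1 + θ ≤ a / v := by
    rw [le_div_iff₀ hv]
    rcases le_or_gt 0 (1 + θ) with h | h
    · nlinarith [sq_nonneg θ]
    · nlinarith
  have hb : 1 + (q : ℝ) * (a / v - 1) ≤ (a / v) ^ q :=
    one_add_mul_sub_le_pow (by have : 0 < a / v := by positivity
                               linarith) q
  have h2 : 1 + (q : ℝ) * θ ≤ (a / v) ^ q := by
    have : (q : ℝ) * θ ≤ q * (a / v - 1) := by gcongr; linarith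
    linarith
  calc _ = (1 + (q : ℝ) * θ) * (a ^ q)⁻¹ := by
        rw [hθ]; field_simp; ring
    _ ≤ (a / v) ^ q * (a ^ q)⁻¹ := by gcongr
    _ = _ := by rw [div_pow]; field_simp

/-- Comparing `∫ g ^ (-q)` with its image under contractions towards `x₁` controls
`∫ g ^ (-q)` by `∫ g ^ (-(q + 1))`. -/
lemma integral_invPow_le {s : Set E} {g : E → ℝ} (hg : ConvexOn ℝ s g)
    (hpos : ∀ x ∈ s, 0 < g x) {q : ℕ} (h1 : Integrable (invPow s g q) μ)
    (h2 : Integrable (invPow s g (q + 1)) μ) {x₁ : E} (hx₁ : x₁ ∈ s) :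
    ((q : ℝ) - Module.finrank ℝ E) * ∫ x, invPow s g q x ∂μ ≤
      q * g x₁ * ∫ x, invPow s g (q + 1) x ∂μ := by
  set d := Module.finrank ℝ E with hd
  set A := ∫ x, invPow s g q x ∂μ with hA
  set B := ∫ x, invPow s g (q + 1) x ∂μ with hB
  have hA0 : 0 ≤ A := integral_nonneg (invPow_nonneg hpos)
  have hB0 : 0 ≤ B := integral_nonneg (invPow_nonneg hpos)
  have hg1 := hpos x₁ hx₁
  have key : ∀ ε : ℝ, 0 < ε → ε < 1 →
      (1 - ε) ^ d * ((1 + ε * q) * A - ε * q * g x₁ * B) ≤ A := by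
    intro ε hε0 hε1
    have hl : 0 < 1 - ε := by linarith
    have hcomp : ∫ x, invPow s g q ((1 - ε) • (x - x₁) + x₁) ∂μ = ((1 - ε) ^ d)⁻¹ * A := by
      rw [integral_sub_right_eq_self (fun y => invPow s g q ((1 - ε) • y + x₁)) x₁,
        Measure.integral_comp_smul μ (fun y => invPow s g q (y + x₁)) (1 - ε),
        integral_add_right_eq_self, smul_eq_mul, abs_of_pos (by positivity)]
    have hci : Integrable (fun x => invPow s g q ((1 - ε) • (x - x₁) + x₁)) μ :=
      ((h1.comp_add_right x₁).comp_smul hl.ne').comp_sub_right x₁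
    have hmono : ∫ x, ((1 + ε * q) * invPow s g q x - ε * q * g x₁ * invPow s g (q + 1) x) ∂μ ≤
        ∫ x, invPow s g q ((1 - ε) • (x - x₁) + x₁) ∂μ := by
      apply integral_mono ((h1.const_mul _).sub (h2.const_mul _)) hci
      intro x
      change (1 + ε * q) * invPow s g q x - ε * q * g x₁ * invPow s g (q + 1) x ≤ _
      by_cases hx : x ∈ s
      · have hz : (1 - ε) • (x - x₁) + x₁ = (1 - ε) • x + ε • x₁ := by module
        have hzs := hg.1 hx hx₁ hl.le hε0.le (by ring)
        have hzle := hg.2 hx hx₁ hl.le hε0.le (by ring)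
        simp only [smul_eq_mul] at hzle
        simp only [hz, invPow_of_mem hx, invPow_of_mem hzs]
        exact inv_pow_tangent (hpos x hx) (hpos _ hzs) (by linarith) q
      · simp only [invPow_of_notMem hx, mul_zero, sub_zero]
        exact invPow_nonneg hpos _
    rw [integral_sub (h1.const_mul _) (h2.const_mul _), integral_const_mul, integral_const_mul,
      hcomp, le_inv_mul_iff₀ (by positivity)] at hmono
    exact hmono
  have key2 : ∀ ε : ℝ, 0 < ε → ε < 1 →
      ((q : ℝ) - d) * A ≤ q * g x₁ * B + ε * (d * q * A) := by
    intro ε hε0 hε1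
    have h := key ε hε0 hε1
    have hbern : 1 - d * ε ≤ (1 - ε) ^ d := by
      have := one_add_mul_le_pow (a := -ε) (by linarith) d
      calc 1 - d * ε = 1 + d * (-ε) := by ring
        _ ≤ (1 + -ε) ^ d := this
        _ = _ := by ring
    have hle1 : (1 - ε) ^ d ≤ 1 := pow_le_one₀ (by linarith) (by linarith)
    have h3 : (1 - d * ε) * ((1 + ε * q) * A) ≤ (1 - ε) ^ d * ((1 + ε * q) * A) := by gcongr
    have h4 : (1 - ε) ^ d * (ε * q * g x₁ * B) ≤ 1 * (ε * q * g x₁ * B) := by gcongr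
    have h5 : ε * (((q : ℝ) - d) * A) ≤ ε * (q * g x₁ * B + ε * (d * q * A)) := by
      nlinarith
    exact le_of_mul_le_mul_left h5 hε0
  have hK : 0 ≤ (d : ℝ) * q * A := by positivity
  by_contra! hcon
  set K := (d : ℝ) * q * A with hKdef
  set Δ := ((q : ℝ) - d) * A - q * g x₁ * B with hΔ
  have hΔ0 : 0 < Δ := by linarith
  have hm : 0 < min (1 / 2) (Δ / (2 * (K + 1))) := lt_min (by norm_num) (by positivity)
  have h := key2 _ hm (lt_of_le_of_lt (min_le_left _ _) (by norm_num))
  have h6 : min (1 / 2) (Δ / (2 * (K + 1))) * K ≤ Δ / (2 * (K + 1)) * (K + 1) := by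
    gcongr
    · exact min_le_right _ _
    · linarith
  have h7 : Δ / (2 * (K + 1)) * (K + 1) = Δ / 2 := by field_simp
  linarith

end Powers

/-! ### The entropy bound -/

/-- A majorant of the logarithm built from `1`, `x` and `1 / x`, tangent to it at `1` and tighter
near `1` than the tangent line. -/
lemma log_le_rational {x : ℝ} (hx : 1 / 3 ≤ x) :
    Real.log x ≤ -(1 / 2) + 3 / 4 * x - 1 / 4 / x := by
  have hx0 : 0 < x := by linarith
  rcases le_total 1 x with h | h
  · obtain ⟨w, hw, rfl⟩ : ∃ w : ℝ, 1 ≤ w ∧ x = w ^ 2 :=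
      ⟨√x, Real.one_le_sqrt.2 h, (Real.sq_sqrt hx0.le).symm⟩
    have h1 : Real.log (w ^ 2) ≤ 2 * (w - 1) := by
      rw [Real.log_pow]
      push_cast
      have := Real.log_le_sub_one_of_pos (by linarith : 0 < w)
      linarith
    refine h1.trans ?_
    have h2 : -(1 / 2) + 3 / 4 * w ^ 2 - 1 / 4 / w ^ 2 - 2 * (w - 1) =
        (w - 1) ^ 3 * (3 * w + 1) / (4 * w ^ 2) := by
      field_simp; ring
    have h3 : 0 ≤ (w - 1) ^ 3 * (3 * w + 1) / (4 * w ^ 2) := by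
      have : 0 ≤ w - 1 := by linarith
      positivity
    linarith
  · have hy : 0 ≤ 1 / x - 1 := by
      rw [sub_nonneg, le_div_iff₀ hx0]; linarith
    have h1 := Real.le_log_one_add_of_nonneg hy
    rw [add_sub_cancel, Real.log_div one_ne_zero hx0.ne', Real.log_one, zero_sub] at h1
    have h2 : 2 * (1 / x - 1) / (1 / x - 1 + 2) - (1 / 2 - 3 / 4 * x + 1 / 4 / x) =
        (1 - x) ^ 2 * (3 * x - 1) / (4 * x * (1 + x)) := by
      have : 1 / x - 1 + 2 = (1 + x) / x := by field_simp; ring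
      rw [this]
      field_simp; ring
    have h3 : 0 ≤ (1 - x) ^ 2 * (3 * x - 1) / (4 * x * (1 + x)) := by
      have : 0 ≤ 3 * x - 1 := by linarith
      positivity
    linarith

/-- The numerical input to the entropy bound. The two fractions in the last condition are the
bounds for the means of `g / inf g` and `inf g / g` under the density `g ^ (-β)`. -/
lemma exists_log_bound {d β : ℕ} (hd : 2 ≤ d) (hβ : 2 * d ≤ β) :
    ∃ a b e : ℝ, 0 ≤ b ∧ 0 ≤ e ∧ (∀ t : ℝ, 1 ≤ t → Real.log t ≤ a + b * t - e / t) ∧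
      a + b * (((β : ℝ) - 1) / (β - 1 - d)) - e * ((β - d) / β) ≤ 2 * d / β := by
  have hdR : (2 : ℝ) ≤ d := by exact_mod_cast hd
  have tangent : ∀ c : ℝ, 0 < c → ∀ t : ℝ, 1 ≤ t →
      Real.log t ≤ (Real.log c - 1) + c⁻¹ * t - 0 / t := by
    intro c hc t ht
    have := Real.log_le_sub_one_of_pos (show 0 < t / c by positivity)
    rw [Real.log_div (by positivity) hc.ne'] at this
    rw [zero_div, inv_mul_eq_div]
    linarith
  -- The tangent line suffices unless `d = 2`, `β = 4`, where the `1 / t` term is needed.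
  obtain h | h | h : 2 * d + 2 ≤ β ∨ β = 2 * d + 1 ∨ β = 2 * d := by omega
  · have hβR : 2 * (d : ℝ) + 2 ≤ β := by exact_mod_cast h
    refine ⟨_, _, _, by norm_num, le_rfl, tangent 1 one_pos, ?_⟩
    have h1 : 0 < (β : ℝ) - 1 - d := by linarith
    have h2 : 0 < (β : ℝ) := by linarith
    rw [Real.log_one, zero_mul, inv_one, one_mul, sub_zero]
    have h3 : (0 - 1) + ((β : ℝ) - 1) / (β - 1 - d) = d / (β - 1 - d) := by
      field_simp; ring
    rw [h3, div_le_div_iff₀ h1 h2]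
    nlinarith
  · have hβR : (β : ℝ) = 2 * d + 1 := by exact_mod_cast h
    refine ⟨_, _, _, by norm_num, le_rfl, tangent 2 two_pos, ?_⟩
    have h3 : ((β : ℝ) - 1) / (β - 1 - d) = 2 := by
      rw [hβR]; rw [div_eq_iff (by linarith)]; ring
    have h4 : (4 : ℝ) / 5 ≤ 2 * d / β := by
      rw [hβR, div_le_div_iff₀ (by norm_num) (by linarith)]; linarith
    rw [h3]
    have := Real.log_two_lt_d9
    norm_num at this ⊢
    linarith
  · have hβR : (β : ℝ) = 2 * d := by exact_mod_cast h
    have h4 : 2 * (d : ℝ) / β = 1 := by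
      rw [hβR]; exact div_self (by linarith)
    have h5 : ((β : ℝ) - d) / β = 1 / 2 := by
      rw [hβR, div_eq_iff (by linarith)]; ring
    have he := Real.exp_one_gt_d9
    rcases hd.eq_or_lt with h2 | h2
    · refine ⟨Real.log 3 - 1 / 2, 1 / 4, 3 / 4, by norm_num, by norm_num, ?_, ?_⟩
      · intro t ht
        have := log_le_rational (x := t / 3) (by linarith)
        rw [Real.log_div (by positivity) (by norm_num)] at this
        have h6 : (1 : ℝ) / 4 / (t / 3) = 3 / 4 / t := by field_simp
        rw [h6] at this
        linarith
      · rw [h4, h5, hβR, ← h2]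
        have : Real.log 3 ≤ 9 / 8 := by
          rw [Real.log_le_iff_le_exp (by norm_num)]
          have h7 : Real.exp (9 / 8) = Real.exp 1 * Real.exp (1 / 8) := by
            rw [← Real.exp_add]; norm_num
          have h8 := Real.add_one_le_exp (1 / 8 : ℝ)
          rw [h7]
          nlinarith
        norm_num
        linarith
    · have hd3 : (3 : ℝ) ≤ d := by exact_mod_cast h2
      refine ⟨_, _, _, by norm_num, le_rfl, tangent (5 / 2) (by norm_num), ?_⟩
      have h3 : ((β : ℝ) - 1) / (β - 1 - d) ≤ 5 / 2 := by
        rw [hβR, div_le_iff₀ (by linarith)]; linarith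
      have h6 : Real.log (5 / 2) ≤ 1 := by
        rw [Real.log_le_iff_le_exp (by norm_num)]; linarith
      rw [h4]
      have : (5 / 2 : ℝ)⁻¹ * (((β : ℝ) - 1) / (β - 1 - d)) ≤ (5 / 2 : ℝ)⁻¹ * (5 / 2) := by gcongr
      norm_num at this ⊢
      linarith

lemma le_mul_csInf {S : Set ℝ} (hne : S.Nonempty) {X Y : ℝ} (hY : 0 ≤ Y)
    (h : ∀ a ∈ S, X ≤ Y * a) : X ≤ Y * sInf S := by
  rcases hY.eq_or_lt with rfl | hY
  · obtain ⟨a, ha⟩ := hne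
    simpa using h a ha
  · rw [← div_le_iff₀' hY]
    exact le_csInf hne fun a ha => by rw [div_le_iff₀' hY]; exact h a ha

section Entropy

variable {E : Type*} [NormedAddCommGroup E] [NormedSpace ℝ E] [FiniteDimensional ℝ E]
  [MeasurableSpace E] [BorelSpace E] {μ : Measure E} [μ.IsAddHaarMeasure]

/-- The entropy of the density `g ^ (-β)` exceeds its minimal value `-log sup g ^ (-β)` by at most
twice the dimension. -/
lemma entropy_bound {s : Set E} {g : E → ℝ} (hg : ConvexOn ℝ s g)
    (hpos : ∀ x ∈ s, 0 < g x) {β : ℕ} (hd : 2 ≤ Module.finrank ℝ E)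
    (hβ : 2 * Module.finrank ℝ E ≤ β) (hI : ∫ x, invPow s g β x ∂μ = 1)
    {c : ℝ} (hc : 0 < c) (hgr : ∀ x ∈ s, c * (1 + ‖x‖) ≤ g x)
    (hlog : Integrable (fun x => invPow s g β x * Real.log (g x)) μ) :
    ∃ g₀ > 0, (∀ x ∈ s, g₀ ≤ g x) ∧
      ∫ x, invPow s g β x * Real.log (g x) ∂μ ≤
        Real.log g₀ + 2 * Module.finrank ℝ E / β := by
  set d := Module.finrank ℝ E with hddef
  have hsne : s.Nonempty := by
    by_contra h
    rw [Set.not_nonempty_iff_eq_empty] at h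
    subst h
    simp [invPow] at hI
  have hne : (g '' s).Nonempty := hsne.image g
  have hcg : ∀ x ∈ s, c ≤ g x := fun x hx => by
    have := hgr x hx
    nlinarith [norm_nonneg x]
  have hbdd : BddBelow (g '' s) := ⟨c, by rintro _ ⟨x, hx, rfl⟩; exact hcg x hx⟩
  set g₀ := sInf (g '' s) with hg₀
  have hg₀pos : 0 < g₀ :=
    hc.trans_le (le_csInf hne (by rintro _ ⟨x, hx, rfl⟩; exact hcg x hx))
  have hle : ∀ x ∈ s, g₀ ≤ g x := fun x hx => csInf_le hbdd ⟨x, hx, rfl⟩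
  refine ⟨g₀, hg₀pos, hle, ?_⟩
  obtain ⟨q, rfl⟩ : ∃ q, β = q + 1 := ⟨β - 1, by omega⟩
  have hi0 : Integrable (invPow s g q) μ := integrable_invPow hg hpos hc hgr (by omega)
  have hi1 : Integrable (invPow s g (q + 1)) μ := integrable_invPow hg hpos hc hgr (by omega)
  have hi2 : Integrable (invPow s g (q + 1 + 1)) μ := integrable_invPow hg hpos hc hgr (by omega)
  have hup : ((q : ℝ) - d) * ∫ x, invPow s g q x ∂μ ≤ q * g₀ := by
    refine le_mul_csInf hne (by positivity) ?_
    rintro _ ⟨x, hx, rfl⟩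
    have := integral_invPow_le hg hpos hi0 hi1 hx
    rwa [hI, mul_one] at this
  have hlo : ((q : ℝ) + 1 - d) ≤ (q + 1) * (∫ x, invPow s g (q + 1 + 1) x ∂μ) * g₀ := by
    have h0 : 0 ≤ ∫ x, invPow s g (q + 1 + 1) x ∂μ := integral_nonneg (invPow_nonneg hpos)
    refine le_mul_csInf hne (by positivity) ?_
    rintro _ ⟨x, hx, rfl⟩
    have := integral_invPow_le hg hpos hi1 hi2 hx
    rw [hI, mul_one] at this
    push_cast at this
    linarith
  obtain ⟨a, b, e, hb, he, hbound, hnum⟩ := exists_log_bound hd hβ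
  have hmono : ∫ x, invPow s g (q + 1) x * Real.log (g x) ∂μ ≤
      ∫ x, ((Real.log g₀ + a) * invPow s g (q + 1) x + b / g₀ * invPow s g q x -
        e * g₀ * invPow s g (q + 1 + 1) x) ∂μ := by
    refine integral_mono hlog (((hi1.const_mul _).add (hi0.const_mul _)).sub (hi2.const_mul _)) ?_
    intro x
    change invPow s g (q + 1) x * Real.log (g x) ≤
      (Real.log g₀ + a) * invPow s g (q + 1) x + b / g₀ * invPow s g q x -
        e * g₀ * invPow s g (q + 1 + 1) x
    by_cases hx : x ∈ s
    · have hgx := hpos x hx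
      have h1 := hbound (g x / g₀) ((one_le_div hg₀pos).2 (hle x hx))
      rw [Real.log_div hgx.ne' hg₀pos.ne'] at h1
      simp only [invPow_of_mem hx]
      calc (g x ^ (q + 1))⁻¹ * Real.log (g x)
          ≤ (g x ^ (q + 1))⁻¹ * (Real.log g₀ + (a + b * (g x / g₀) - e / (g x / g₀))) := by
            gcongr; linarith
        _ = _ := by field_simp; ring
    · simp [invPow_of_notMem hx]
  refine hmono.trans ?_
  have hsum : Integrable (fun x => (Real.log g₀ + a) * invPow s g (q + 1) x +
      b / g₀ * invPow s g q x) μ := (hi1.const_mul _).add (hi0.const_mul _)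
  rw [integral_sub hsum (hi2.const_mul _),
    integral_add (hi1.const_mul _) (hi0.const_mul _), integral_const_mul, integral_const_mul,
    integral_const_mul, hI, mul_one]
  have hqd : (0 : ℝ) < q - d := by
    have : (d : ℝ) + 1 ≤ q := by exact_mod_cast (by omega : d + 1 ≤ q)
    linarith
  push_cast at hnum ⊢
  have hT : b / g₀ * ∫ x, invPow s g q x ∂μ ≤ b * (((q : ℝ) + 1 - 1) / (q + 1 - 1 - d)) := by
    rw [add_sub_cancel_right, div_mul_eq_mul_div, mul_div_assoc]
    refine mul_le_mul_of_nonneg_left ?_ hb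
    rw [div_le_div_iff₀ hg₀pos hqd]
    linarith
  have hU : e * (((q : ℝ) + 1 - d) / (q + 1)) ≤
      e * g₀ * ∫ x, invPow s g (q + 1 + 1) x ∂μ := by
    rw [mul_assoc]
    gcongr
    rw [div_le_iff₀ (by positivity)]
    linarith
  linarith

end Entropy

/-! ### The marginal density -/

section Marginal

lemma abs_mul_log_le {a S : ℝ} (ha : 0 ≤ a) (haS : a ≤ S) :
    |a * Real.log a| ≤ 2 * √a + a * |Real.log S| := by
  rcases ha.eq_or_lt with rfl | ha
  · simp
  have hsq : 0 < √a := Real.sqrt_pos.2 ha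
  rw [abs_mul, abs_of_pos ha]
  rcases le_total 1 a with h | h
  · have h1 : |Real.log a| ≤ |Real.log S| := by
      rw [abs_of_nonneg (Real.log_nonneg h), abs_of_nonneg (Real.log_nonneg (h.trans haS))]
      exact Real.log_le_log ha haS
    have : a * |Real.log a| ≤ a * |Real.log S| := by gcongr
    linarith
  · have h1 : |Real.log a| ≤ 2 * (1 / √a) := by
      rw [abs_of_nonpos (Real.log_nonpos ha.le h)]
      have h2 := Real.log_le_sub_one_of_pos (show 0 < 1 / √a by positivity)
      rw [Real.log_div one_ne_zero hsq.ne', Real.log_one, Real.log_sqrt ha.le] at h2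
      linarith
    have h3 : a * |Real.log a| ≤ a * (2 * (1 / √a)) := by gcongr
    have h4 : a * (2 * (1 / √a)) = 2 * √a := by
      have := Real.mul_self_sqrt ha.le
      field_simp
      nlinarith
    have h5 : 0 ≤ a * |Real.log S| := by positivity
    linarith

variable {m : ℕ} {f : (Fin m → ℝ) × ℝ → ℝ} {C : ℝ} {β : ℕ}

/-- Splitting the decay of the joint density between the two factors; the exponent `3 / 2`
leaves enough decay in `y` for the square root of the marginal to be integrable. -/
lemma decay_split (hβ : 2 * (m + 1) ≤ β) (hC : 0 ≤ C)
    (hdec : ∀ x, f x ≤ C * (1 + ‖x‖) ^ (-(β : ℝ))) (y : Fin m → ℝ) (z : ℝ) :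
    f (y, z) ≤ C * (1 + ‖y‖) ^ (-(2 * m + 1 / 2 : ℝ)) * (1 + ‖z‖) ^ (-(3 / 2 : ℝ)) := by
  have hβR : 2 * ((m : ℝ) + 1) ≤ β := by exact_mod_cast hβ
  have h1 : (1 : ℝ) ≤ 1 + ‖(y, z)‖ := by linarith [norm_nonneg (y, z)]
  have h0 : (0 : ℝ) < 1 + ‖(y, z)‖ := by linarith
  calc f (y, z) ≤ C * (1 + ‖(y, z)‖) ^ (-(β : ℝ)) := hdec _
    _ ≤ C * (1 + ‖(y, z)‖) ^ (-(2 * m + 1 / 2 : ℝ) + -(3 / 2 : ℝ)) := by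
        gcongr 1
        exact Real.rpow_le_rpow_of_exponent_le h1 (by linarith)
    _ = C * (1 + ‖(y, z)‖) ^ (-(2 * m + 1 / 2 : ℝ)) * (1 + ‖(y, z)‖) ^ (-(3 / 2 : ℝ)) := by
        rw [Real.rpow_add h0]; ring
    _ ≤ _ := by
        have ha : (1 + ‖(y, z)‖) ^ (-(2 * m + 1 / 2 : ℝ)) ≤ (1 + ‖y‖) ^ (-(2 * m + 1 / 2 : ℝ)) := by
          apply Real.rpow_le_rpow_of_nonpos (by positivity)
          · gcongr; exact norm_fst_le (y, z)
          · have : (0 : ℝ) ≤ m := by positivity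
            linarith
        have hb : (1 + ‖(y, z)‖) ^ (-(3 / 2 : ℝ)) ≤ (1 + ‖z‖) ^ (-(3 / 2 : ℝ)) := by
          apply Real.rpow_le_rpow_of_nonpos (by positivity)
          · gcongr; exact norm_snd_le (y, z)
          · norm_num
        gcongr

lemma integrable_decay_real : Integrable fun z : ℝ => (1 + ‖z‖) ^ (-(3 / 2 : ℝ)) :=
  integrable_one_add_norm (by simp; norm_num)

lemma integrable_section (hβ : 2 * (m + 1) ≤ β) (hC : 0 ≤ C) (h0 : ∀ x, 0 ≤ f x)
    (hdec : ∀ x, f x ≤ C * (1 + ‖x‖) ^ (-(β : ℝ)))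
    (hconv : ∀ t : ℝ, Convex ℝ {x | t < f x}) (y : Fin m → ℝ) :
    Integrable fun z : ℝ => f (y, z) := by
  refine (integrable_decay_real.const_mul (C * (1 + ‖y‖) ^ (-(2 * m + 1 / 2 : ℝ)))).mono' ?_ ?_
  · exact (measurable_of_convex_superlevel_real fun t =>
      convex_section (hconv t) y).aestronglyMeasurable
  · refine Filter.Eventually.of_forall fun z => ?_
    rw [Real.norm_of_nonneg (h0 _)]
    exact decay_split hβ hC hdec y z

lemma marginal_decay (hβ : 2 * (m + 1) ≤ β) (hC : 0 ≤ C) (h0 : ∀ x, 0 ≤ f x)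
    (hdec : ∀ x, f x ≤ C * (1 + ‖x‖) ^ (-(β : ℝ)))
    (hconv : ∀ t : ℝ, Convex ℝ {x | t < f x}) (y : Fin m → ℝ) :
    ∫ z : ℝ, f (y, z) ≤ C * (∫ z : ℝ, (1 + ‖z‖) ^ (-(3 / 2 : ℝ))) *
      (1 + ‖y‖) ^ (-(2 * m + 1 / 2 : ℝ)) := by
  calc ∫ z : ℝ, f (y, z)
      ≤ ∫ z : ℝ, C * (1 + ‖y‖) ^ (-(2 * m + 1 / 2 : ℝ)) * (1 + ‖z‖) ^ (-(3 / 2 : ℝ)) :=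
        integral_mono (integrable_section hβ hC h0 hdec hconv y)
          (integrable_decay_real.const_mul _) fun z => decay_split hβ hC hdec y z
    _ = _ := by rw [integral_const_mul]; ring

/-- The marginal has finite differential entropy. -/
lemma integrable_marginal_entropy (hβ : 2 * (m + 1) ≤ β) (hC : 0 ≤ C) (h0 : ∀ x, 0 ≤ f x)
    (hdec : ∀ x, f x ≤ C * (1 + ‖x‖) ^ (-(β : ℝ)))
    (hconv : ∀ t : ℝ, Convex ℝ {x | t < f x}) (hfint : Integrable f) {S : ℝ}
    (hS : ∀ y, ∫ z : ℝ, f (y, z) ≤ S) :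
    Integrable fun y : Fin m → ℝ => (∫ z : ℝ, f (y, z)) * Real.log (∫ z : ℝ, f (y, z)) := by
  have hI : Integrable fun y : Fin m → ℝ => ∫ z : ℝ, f (y, z) := by
    rw [Measure.volume_eq_prod] at hfint
    exact hfint.integral_prod_left
  set B := C * (∫ z : ℝ, (1 + ‖z‖) ^ (-(3 / 2 : ℝ))) with hB
  have hdom : Integrable fun y : Fin m → ℝ =>
      2 * (√B * (1 + ‖y‖) ^ (-(m + 1 / 4 : ℝ))) + (∫ z : ℝ, f (y, z)) * |Real.log S| := by
    refine Integrable.add (Integrable.const_mul (Integrable.const_mul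
      (integrable_one_add_norm ?_) _) _) (hI.mul_const _)
    simp
  refine hdom.mono' ?_ ?_
  · have := hI.aestronglyMeasurable.aemeasurable
    exact (this.mul (Real.measurable_log.comp_aemeasurable this)).aestronglyMeasurable
  · refine Filter.Eventually.of_forall fun y => ?_
    have hI0 : 0 ≤ ∫ z : ℝ, f (y, z) := integral_nonneg fun z => h0 _
    refine (abs_mul_log_le hI0 (hS y)).trans ?_
    have hy : 0 ≤ 1 + ‖y‖ := by positivity
    have h1 : √(∫ z : ℝ, f (y, z)) ≤ √B * (1 + ‖y‖) ^ (-(m + 1 / 4 : ℝ)) := by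
      refine (Real.sqrt_le_sqrt (marginal_decay hβ hC h0 hdec hconv y)).trans (le_of_eq ?_)
      rw [Real.sqrt_mul' _ (by positivity), Real.sqrt_eq_rpow ((1 + ‖y‖) ^ _),
        ← Real.rpow_mul hy]
      congr 2
      ring
    linarith

lemma sup_decay (hC : 0 ≤ C) (hdec : ∀ x, f x ≤ C * (1 + ‖x‖) ^ (-(β : ℝ))) (y : Fin m → ℝ) :
    ⨆ z : ℝ, f (y, z) ≤ C * (1 + ‖y‖) ^ (-(β : ℝ)) := by
  refine ciSup_le fun z => (hdec _).trans ?_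
  gcongr 1
  apply Real.rpow_le_rpow_of_nonpos (by positivity)
  · gcongr; exact norm_fst_le (y, z)
  · simp

lemma integrable_sup (hβ : 2 * (m + 1) ≤ β) (hC : 0 ≤ C) (h0 : ∀ x, 0 ≤ f x) {F : ℝ}
    (hF : ∀ x, f x ≤ F)
    (hdec : ∀ x, f x ≤ C * (1 + ‖x‖) ^ (-(β : ℝ)))
    (hconv : ∀ t : ℝ, Convex ℝ {x | t < f x}) :
    Integrable fun y : Fin m → ℝ => ⨆ z : ℝ, f (y, z) := by
  refine ((integrable_one_add_norm (r := (β : ℝ)) ?_).const_mul C).mono' ?_ ?_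
  · simp; omega
  · refine (aemeasurable_of_convex_superlevel _ fun t => ?_).aestronglyMeasurable
    have : {y : Fin m → ℝ | t < ⨆ z : ℝ, f (y, z)} =
        {y | ∃ z : ℝ, (y, z) ∈ {x | t < f x}} := by
      ext y
      exact lt_ciSup_iff ⟨F, by rintro _ ⟨z, rfl⟩; exact hF _⟩
    rw [this]
    exact convex_proj (hconv t)
  · refine Filter.Eventually.of_forall fun y => ?_
    rw [Real.norm_of_nonneg (Real.iSup_nonneg fun z => h0 _)]
    exact sup_decay hC hdec y

end Marginal

/-- For `n = m + 1 ≥ 2`, an integer `β ≥ 2n`, and a β-concave probability density `f` on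
`ℝ^n` with finite differential entropy `h(f)`, denoting by `f_{n-1}` the marginal density
of the first `n-1` coordinates,
`log ∫ sup_{x_n} f(x^{n-1}, x_n) dx^{n-1} ≤ h(f_{n-1}) - h(f) + log n + 2n`. -/
theorem log_sup_marginal_bound
    (m : ℕ) (hm : 1 ≤ m) (β : ℕ) (hβ : 2 * (m + 1) ≤ β)
    (f : ((Fin m → ℝ) × ℝ) → ℝ)
    (hf_prob : (∫ x, f x) = 1)
    (hf : IsBetaConcaveProd m (β : ℝ) f)
    (hent : Integrable (fun x => f x * Real.log (f x))) :
    Real.log (∫ y : Fin m → ℝ, ⨆ z : ℝ, f (y, z)) ≤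
      (∫ y : Fin m → ℝ,
          -((∫ z : ℝ, f (y, z)) * Real.log (∫ z : ℝ, f (y, z)))) -
        (∫ x, -(f x * Real.log (f x))) +
      Real.log ((m : ℝ) + 1) + 2 * ((m : ℝ) + 1) := by
  obtain ⟨s, g, hg, hs, hns⟩ := hf
  have hpos : ∀ x ∈ s, 0 < g x := fun x hx => (hs x hx).1
  obtain rfl : f = invPow s g β := by
    funext x
    by_cases hx : x ∈ s
    · rw [invPow_of_mem hx, (hs x hx).2, Real.rpow_neg (hpos x hx).le, Real.rpow_natCast]
    · rw [invPow_of_notMem hx, hns x hx]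
  have hβR : (0 : ℝ) < β := by exact_mod_cast (by omega : 0 < β)
  have hdim : Module.finrank ℝ ((Fin m → ℝ) × ℝ) = m + 1 := by simp
  have hfint : Integrable (invPow s g β) := by
    by_contra h
    rw [integral_undef h] at hf_prob
    exact zero_ne_one hf_prob
  have h0 : ∀ x, 0 ≤ invPow s g β x := invPow_nonneg hpos
  have hconv := convex_superlevel_invPow hg hpos β
  obtain ⟨c, hc, hgr⟩ := linear_growth hg hpos (by omega) hfint (by rw [hf_prob]; exact one_pos)
  have hdec := invPow_le_of_growth hc hgr β
  have hC : 0 ≤ (c ^ β)⁻¹ := by positivity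
  have hflog : ∀ x, invPow s g β x * Real.log (invPow s g β x) =
      -(β * (invPow s g β x * Real.log (g x))) := by
    intro x
    by_cases hx : x ∈ s
    · rw [invPow_of_mem hx, Real.log_inv, Real.log_pow]; ring
    · simp [invPow_of_notMem hx]
  have hlog : Integrable fun x => invPow s g β x * Real.log (g x) := by
    refine (hent.const_mul (-(β : ℝ)⁻¹)).congr (Filter.Eventually.of_forall fun x => ?_)
    simp only [hflog x]
    field_simp
  obtain ⟨g₀, hg₀, hle, hentropy⟩ := entropy_bound hg hpos (by omega) (by omega) hf_prob hc hgr hlog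
  set F := (g₀ ^ β)⁻¹ with hFdef
  have hFpos : 0 < F := by positivity
  have hF : ∀ x, invPow s g β x ≤ F := by
    intro x
    by_cases hx : x ∈ s
    · rw [invPow_of_mem hx, hFdef]
      have := hle x hx
      gcongr
    · rw [invPow_of_notMem hx]; exact hFpos.le
  have hMint := integrable_sup hβ hC h0 hF hdec hconv
  have hsec := integrable_section hβ hC h0 hdec hconv
  have hI1 : ∫ y : Fin m → ℝ, ∫ z : ℝ, invPow s g β (y, z) = 1 := by
    rw [← hf_prob, Measure.volume_eq_prod]
    exact (integral_prod _ hfint).symm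
  have hIint : Integrable fun y : Fin m → ℝ => ∫ z : ℝ, invPow s g β (y, z) := by
    rw [Measure.volume_eq_prod] at hfint
    exact hfint.integral_prod_left
  have hM0 : ∀ y : Fin m → ℝ, 0 ≤ ⨆ z : ℝ, invPow s g β (y, z) :=
    fun y => Real.iSup_nonneg fun z => h0 _
  set J := ∫ y : Fin m → ℝ, ⨆ z : ℝ, invPow s g β (y, z) with hJ
  have hJpos : 0 < J := by
    refine lt_of_le_of_ne (integral_nonneg hM0) fun hzero => ?_
    have hae := (integral_eq_zero_iff_of_nonneg hM0 hMint).1 hzero.symm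
    have : ∫ y : Fin m → ℝ, ∫ z : ℝ, invPow s g β (y, z) = 0 := by
      refine integral_eq_zero_of_ae ?_
      filter_upwards [hae] with y hy
      refine integral_eq_zero_of_ae (Filter.Eventually.of_forall fun z => ?_)
      refine le_antisymm ?_ (h0 _)
      exact (le_ciSup (f := fun z : ℝ => invPow s g β (y, z))
        ⟨F, by rintro _ ⟨z, rfl⟩; exact hF _⟩ z).trans hy.le
    rw [hI1] at this
    exact one_ne_zero this
  have hS : ∀ y : Fin m → ℝ, ∫ z : ℝ, invPow s g β (y, z) ≤ (m + 1) * F / J := by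
    intro y
    have h := rogers_shephard_functional h0 hF hconv y
      (fun t ht => ((hsec y).measure_gt_lt_top ht).ne)
    rw [← ofReal_integral_eq_lintegral_ofReal hMint (Filter.Eventually.of_forall hM0),
      ← ofReal_integral_eq_lintegral_ofReal (hsec y) (Filter.Eventually.of_forall fun z => h0 _),
      ← ofReal_integral_eq_lintegral_ofReal hfint (Filter.Eventually.of_forall h0), hf_prob,
      ENNReal.ofReal_one, mul_one, ← ENNReal.ofReal_mul hJpos.le] at h
    have hm1 : ((m : ℝ≥0∞) + 1) = ENNReal.ofReal ((m : ℝ) + 1) := by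
      rw [ENNReal.ofReal_add (by positivity) zero_le_one]; simp
    rw [hm1, ← ENNReal.ofReal_mul (by positivity),
      ENNReal.ofReal_le_ofReal_iff (by positivity)] at h
    rw [le_div_iff₀ hJpos]
    linarith
  set S := ((m : ℝ) + 1) * F / J with hSdef
  have hSpos : 0 < S := by positivity
  have hIent := integrable_marginal_entropy hβ hC h0 hdec hconv hfint hS
  have hmarg : -Real.log S ≤ ∫ y : Fin m → ℝ, -((∫ z : ℝ, invPow s g β (y, z)) *
      Real.log (∫ z : ℝ, invPow s g β (y, z))) := by
    calc -Real.log S = ∫ y : Fin m → ℝ, (∫ z : ℝ, invPow s g β (y, z)) * (-Real.log S) := by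
          rw [integral_mul_const, hI1, one_mul]
      _ ≤ _ := by
          refine integral_mono (hIint.mul_const _) hIent.neg fun y => ?_
          have hI0 : 0 ≤ ∫ z : ℝ, invPow s g β (y, z) := integral_nonneg fun z => h0 _
          rcases hI0.eq_or_lt with h | h
          · simp [← h]
          · have := Real.log_le_log h (hS y)
            have := mul_le_mul_of_nonneg_left this hI0
            simp only
            linarith
  have hjoint : ∫ x, -(invPow s g β x * Real.log (invPow s g β x)) ≤
      β * Real.log g₀ + 2 * ((m : ℝ) + 1) := by
    have : ∀ x, -(invPow s g β x * Real.log (invPow s g β x)) =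
        β * (invPow s g β x * Real.log (g x)) := fun x => by rw [hflog x, neg_neg]
    simp_rw [this]
    rw [integral_const_mul]
    refine (mul_le_mul_of_nonneg_left hentropy hβR.le).trans (le_of_eq ?_)
    rw [hdim]
    push_cast
    field_simp
  have hlogS : Real.log S = Real.log ((m : ℝ) + 1) - β * Real.log g₀ - Real.log J := by
    rw [hSdef, Real.log_div (by positivity) hJpos.ne', Real.log_mul (by positivity) hFpos.ne',
      hFdef, Real.log_inv, Real.log_pow]
    ring
  linarith
end
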